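/- arXiv:1605.03046 — 3 statements merged into one kernel-verified Lean document; each statement's English description precedes it below -/
import Mathlib

section
/- Fix positive reals p₋₁, p₀, p₁, let τ = √(p₋₁/p₁), P(τ) = p₀ + 2√(p₋₁p₁) and P″(τ) = 2p₋₁/τ³. Let b_n denote the total weight of Motzkin bridges of length n and b_{n,k} the total weight of bridges of length n with exactly k sign changes, and define X_n by P[X_n = k] = b_{n,k}/b_n (note b_n ≥ p₀ⁿ > 0). Then X_n/√n converges in distribution to the Rayleigh law R(σ) with σ = (τ/2)·√(P″(τ)/P(τ)): for every real x ≥ 0, lim_{n→∞} (Σ_{k ≤ x√n} b_{n,k})/b_n = 1 − exp(−x²/(2σ²)). -/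
open scoped BigOperators Classical

/-- Value of a step encoded by `Fin 3`: `0 ↦ -1`, `1 ↦ 0`, `2 ↦ +1`. -/
def stepVal (s : Fin 3) : ℤ := (s : ℤ) - 1

/-- Weight of a single step: `p₋₁` for `-1`, `p₀` for `0`, `p₁` for `+1`. -/
def stepWeight (pm p0 p1 : ℝ) (s : Fin 3) : ℝ :=
  if s = 0 then pm else if s = 1 then p0 else p1

/-- Weight of a Motzkin walk (product of its step weights). -/
def walkWeight (pm p0 p1 : ℝ) {n : ℕ} (w : Fin n → Fin 3) : ℝ :=
  ∏ i, stepWeight pm p0 p1 (w i)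

/-- Partial sum `ω_j` of the walk `w`. -/
def psum {n : ℕ} (w : Fin n → Fin 3) (j : ℕ) : ℤ :=
  ∑ i ∈ Finset.univ.filter (fun i : Fin n => (i : ℕ) < j), stepVal (w i)

/-- Total weight of Motzkin bridges of length `n`. -/
noncomputable def bridgeW (pm p0 p1 : ℝ) (n : ℕ) : ℝ :=
  ∑ w ∈ Finset.univ.filter (fun w : Fin n → Fin 3 => psum w n = 0),
    walkWeight pm p0 p1 w

/-- Number of returns to zero of a walk of length `n`. -/
def retZero {n : ℕ} (w : Fin n → Fin 3) : ℕ :=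
  ((Finset.Icc 1 n).filter (fun j => psum w j = 0)).card

/-- Total weight of walks of length `n` with exactly `k` returns to zero. -/
noncomputable def walkRetW (pm p0 p1 : ℝ) (n k : ℕ) : ℝ :=
  ∑ w ∈ Finset.univ.filter (fun w : Fin n → Fin 3 => retZero w = k),
    walkWeight pm p0 p1 w

/-- Number of sign changes of a walk of length `n`. -/
def signChanges {n : ℕ} (w : Fin n → Fin 3) : ℕ :=
  (((Finset.range (n+1)) ×ˢ (Finset.range (n+1))).filter
    (fun p => p.1 < p.2 ∧ psum w p.1 * psum w p.2 < 0 ∧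
      ∀ l ∈ Finset.Ioo p.1 p.2, psum w l = 0)).card

/-- Total weight of bridges of length `n` with exactly `k` sign changes. -/
noncomputable def bridgeSignW (pm p0 p1 : ℝ) (n k : ℕ) : ℝ :=
  ∑ w ∈ Finset.univ.filter
      (fun w : Fin n → Fin 3 => psum w n = 0 ∧ signChanges w = k),
    walkWeight pm p0 p1 w

/-- Total weight of positive excursions of length `n`. -/
noncomputable def posExcW (pm p0 p1 : ℝ) (n : ℕ) : ℝ :=
  ∑ w ∈ Finset.univ.filter
      (fun w : Fin n → Fin 3 => psum w n = 0 ∧ ∀ j ∈ Finset.range (n+1), 0 ≤ psum w j),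
    walkWeight pm p0 p1 w

/-- Total weight of negative excursions of length `n`. -/
noncomputable def negExcW (pm p0 p1 : ℝ) (n : ℕ) : ℝ :=
  ∑ w ∈ Finset.univ.filter
      (fun w : Fin n → Fin 3 => psum w n = 0 ∧ ∀ j ∈ Finset.range (n+1), psum w j ≤ 0),
    walkWeight pm p0 p1 w

/-- A positive bridge: a bridge whose last nonzero partial sum is positive. -/
def IsPosBridge {n : ℕ} (w : Fin n → Fin 3) : Prop :=
  psum w n = 0 ∧ ∃ j ∈ Finset.range (n+1),
    0 < psum w j ∧ ∀ l ∈ Finset.Ioc j n, psum w l = 0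

/-- A negative bridge: a bridge whose last nonzero partial sum is negative. -/
def IsNegBridge {n : ℕ} (w : Fin n → Fin 3) : Prop :=
  psum w n = 0 ∧ ∃ j ∈ Finset.range (n+1),
    psum w j < 0 ∧ ∀ l ∈ Finset.Ioc j n, psum w l = 0

instance {n : ℕ} (w : Fin n → Fin 3) : Decidable (IsPosBridge w) := by
  unfold IsPosBridge; infer_instance

instance {n : ℕ} (w : Fin n → Fin 3) : Decidable (IsNegBridge w) := by
  unfold IsNegBridge; infer_instance

/-- Total weight of positive bridges of length `n` with `k` sign changes. -/
noncomputable def posBridgeSignW (pm p0 p1 : ℝ) (n k : ℕ) : ℝ :=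
  ∑ w ∈ Finset.univ.filter
      (fun w : Fin n → Fin 3 => IsPosBridge w ∧ signChanges w = k),
    walkWeight pm p0 p1 w

/-- Total weight of negative bridges of length `n` with `k` sign changes. -/
noncomputable def negBridgeSignW (pm p0 p1 : ℝ) (n k : ℕ) : ℝ :=
  ∑ w ∈ Finset.univ.filter
      (fun w : Fin n → Fin 3 => IsNegBridge w ∧ signChanges w = k),
    walkWeight pm p0 p1 w

/-- Total weight of walks of length `n` with `k` sign changes. -/
noncomputable def walkSignW (pm p0 p1 : ℝ) (n k : ℕ) : ℝ :=
  ∑ w ∈ Finset.univ.filter (fun w : Fin n → Fin 3 => signChanges w = k),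
    walkWeight pm p0 p1 w

/-- Height of a walk of length `n` (as a natural number; it is `max_j ω_j ≥ 0`). -/
def height {n : ℕ} (w : Fin n → Fin 3) : ℕ :=
  (Finset.range (n+1)).sup (fun j => (psum w j).toNat)

/-- Total weight of walks of length `n` of height exactly `h`. -/
noncomputable def heightW (pm p0 p1 : ℝ) (n h : ℕ) : ℝ :=
  ∑ w ∈ Finset.univ.filter (fun w : Fin n → Fin 3 => height w = h),
    walkWeight pm p0 p1 w

/-- Sign of the last nonzero value of `ω` up to index `n`, and `1` if there is none. -/
def lastSign (ω : ℕ → ℤ) : ℕ → ℤ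
  | 0 => 1
  | n + 1 => if ω (n + 1) = 0 then lastSign ω n else (ω (n + 1)).sign

/-- Number of sign changes of `ω` up to index `n`, when `ω` is regarded as positive initially. -/
def changesFromPos (ω : ℕ → ℤ) : ℕ → ℕ
  | 0 => 0
  | n + 1 => changesFromPos ω n +
      if ω (n + 1) ≠ 0 ∧ (ω (n + 1)).sign ≠ lastSign ω n then 1 else 0

/-- Index pairs up to `n` that witness the sign changes of `ω`. -/
noncomputable def changePairs (ω : ℕ → ℤ) (n : ℕ) : Finset (ℕ × ℕ) :=
  ((Finset.range (n + 1)) ×ˢ (Finset.range (n + 1))).filter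
    (fun p => p.1 < p.2 ∧ ω p.1 * ω p.2 < 0 ∧ ∀ l ∈ Finset.Ioo p.1 p.2, ω l = 0)

theorem signChanges_eq_card_changePairs {n : ℕ} (w : Fin n → Fin 3) :
    signChanges w = (changePairs (psum w) n).card := by
  unfold signChanges changePairs
  congr

theorem lastSign_congr {ω ω' : ℕ → ℤ} {n : ℕ} (h : ∀ i ≤ n, ω i = ω' i) :
    lastSign ω n = lastSign ω' n := by
  induction n with
  | zero => rfl
  | succ n ih => simp [lastSign, h (n + 1) le_rfl, ih fun i hi => h i (by omega)]

theorem changesFromPos_congr {ω ω' : ℕ → ℤ} {n : ℕ} (h : ∀ i ≤ n, ω i = ω' i) :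
    changesFromPos ω n = changesFromPos ω' n := by
  induction n with
  | zero => rfl
  | succ n ih =>
    simp [changesFromPos, h (n + 1) le_rfl, ih fun i hi => h i (by omega),
      lastSign_congr fun i (hi : i ≤ n) => h i (by omega)]

theorem lastSign_eq_or (ω : ℕ → ℤ) (n : ℕ) : lastSign ω n = 1 ∨ lastSign ω n = -1 := by
  induction n with
  | zero => exact Or.inl rfl
  | succ n ih =>
    unfold lastSign
    split_ifs with h
    · exact ih
    · rcases lt_or_gt_of_ne h with h | h
      · exact Or.inr (Int.sign_eq_neg_one_of_neg h)
      · exact Or.inl (Int.sign_eq_one_of_pos h)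

theorem lastSign_of_pos {ω : ℕ → ℤ} (h0 : ω 0 = 0) {n : ℕ} (h : 0 < ω n) :
    lastSign ω n = 1 := by
  cases n with
  | zero => omega
  | succ n => simp [lastSign, h.ne', Int.sign_eq_one_of_pos h]

theorem lastSign_of_neg {ω : ℕ → ℤ} (h0 : ω 0 = 0) {n : ℕ} (h : ω n < 0) :
    lastSign ω n = -1 := by
  cases n with
  | zero => omega
  | succ n => simp [lastSign, h.ne, Int.sign_eq_neg_one_of_neg h]

theorem mem_changePairs_succ {ω : ℕ → ℤ} {n : ℕ} {p : ℕ × ℕ} :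
    p ∈ changePairs ω (n + 1) ↔ p ∈ changePairs ω n ∨
      (p.2 = n + 1 ∧ p.1 ≤ n ∧ ω p.1 * ω (n + 1) < 0 ∧
        ∀ l ∈ Finset.Ioo p.1 (n + 1), ω l = 0) := by
  obtain ⟨a, b⟩ := p
  simp only [changePairs, Finset.mem_filter, Finset.mem_product, Finset.mem_range]
  constructor
  · rintro ⟨⟨h1, h2⟩, h3, h4, h5⟩
    by_cases hb : b = n + 1
    · subst hb
      exact Or.inr ⟨rfl, by omega, h4, h5⟩
    · exact Or.inl ⟨⟨by omega, by omega⟩, h3, h4, h5⟩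
  · rintro (⟨h, h'⟩ | ⟨rfl, h1, h2, h3⟩)
    · exact ⟨⟨by omega, by omega⟩, h'⟩
    · exact ⟨⟨by omega, by omega⟩, by omega, h2, h3⟩

theorem changePairs_eq_empty {ω : ℕ → ℤ} {n : ℕ} (h : ∀ i < n, ω i = 0) :
    changePairs ω n = ∅ := by
  ext ⟨a, b⟩
  simp only [changePairs, Finset.mem_filter, Finset.mem_product, Finset.mem_range,
    Finset.notMem_empty, iff_false]
  rintro ⟨⟨h1, h2⟩, h3, h4, -⟩
  rw [h a (by omega)] at h4
  simp at h4

theorem lastSign_changesFromPos_of_zero {ω : ℕ → ℤ} {n : ℕ} (h : ∀ i ≤ n, ω i = 0) :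
    lastSign ω n = 1 ∧ changesFromPos ω n = 0 := by
  induction n with
  | zero => exact ⟨rfl, rfl⟩
  | succ n ih =>
    obtain ⟨h1, h2⟩ := ih fun i hi => h i (by omega)
    simp [lastSign, changesFromPos, h (n + 1) le_rfl, h1, h2]

theorem exists_last_nonzero {ω : ℕ → ℤ} (h0 : ω 0 = 0) (n : ℕ) :
    (∀ i ≤ n, ω i = 0) ∨ ∃ i ≤ n, ω i ≠ 0 ∧ (ω i).sign = lastSign ω n ∧
      ∀ l, i < l → l ≤ n → ω l = 0 := by
  induction n with
  | zero => exact Or.inl fun i hi => by rw [Nat.le_zero.1 hi, h0]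
  | succ n ih =>
    by_cases h : ω (n + 1) = 0
    · rcases ih with ih | ⟨i, hi, hne, hs, hz⟩
      · left
        intro i hi
        rcases Nat.le_succ_iff.1 hi with hi | rfl
        · exact ih i hi
        · exact h
      · refine Or.inr ⟨i, by omega, hne, by simp [lastSign, h, hs], fun l hl hl' => ?_⟩
        rcases Nat.le_succ_iff.1 hl' with hl' | rfl
        · exact hz l hl hl'
        · exact h
    · exact Or.inr ⟨n + 1, le_rfl, h, by simp [lastSign, h], fun l hl hl' => by omega⟩

theorem mul_neg_iff_sign_ne {a b : ℤ} (ha : a ≠ 0) :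
    a * b < 0 ↔ b ≠ 0 ∧ b.sign ≠ a.sign := by
  rcases lt_trichotomy b 0 with hb | rfl | hb <;> rcases lt_or_gt_of_ne ha with ha | ha <;>
    simp [mul_neg_iff, Int.sign_eq_one_of_pos, Int.sign_eq_neg_one_of_neg, *] <;> omega

/-- Fixing the initial sign alters the number of sign changes by at most one. -/
theorem card_changePairs_le_changesFromPos {ω : ℕ → ℤ} (h0 : ω 0 = 0) (n : ℕ) :
    (changePairs ω n).card ≤ changesFromPos ω n ∧
      changesFromPos ω n ≤ (changePairs ω n).card + 1 := by
  induction n with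
  | zero => simp [changesFromPos, changePairs_eq_empty]
  | succ n ih =>
    rcases exists_last_nonzero h0 n with hz | ⟨i, hi, hne, hs, hz⟩
    · rw [changePairs_eq_empty fun i hi => hz i (by omega)]
      simp only [changesFromPos, (lastSign_changesFromPos_of_zero hz).2, Finset.card_empty]
      split_ifs <;> omega
    · have key : ∀ p : ℕ × ℕ, (p.2 = n + 1 ∧ p.1 ≤ n ∧ ω p.1 * ω (n + 1) < 0 ∧
          ∀ l ∈ Finset.Ioo p.1 (n + 1), ω l = 0) ↔
          p = (i, n + 1) ∧ ω i * ω (n + 1) < 0 := by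
        rintro ⟨a, b⟩
        simp only [Prod.mk.injEq, Finset.mem_Ioo]
        constructor
        · rintro ⟨rfl, ha, hneg, hl⟩
          have hai : a = i := by
            rcases lt_trichotomy a i with h | h | h
            · exact absurd (hl i ⟨h, by omega⟩) hne
            · exact h
            · rw [hz a h ha] at hneg
              simp at hneg
          subst hai
          exact ⟨⟨rfl, rfl⟩, hneg⟩
        · rintro ⟨⟨rfl, rfl⟩, hneg⟩
          exact ⟨rfl, hi, hneg, fun l hl => hz l hl.1 (by omega)⟩
      have hmem : (i, n + 1) ∉ changePairs ω n := by
        simp [changePairs]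
      have hcond : ω i * ω (n + 1) < 0 ↔
          ω (n + 1) ≠ 0 ∧ (ω (n + 1)).sign ≠ lastSign ω n := by
        rw [mul_neg_iff_sign_ne hne, hs]
      have hcard : (changePairs ω (n + 1)).card = (changePairs ω n).card +
          if ω (n + 1) ≠ 0 ∧ (ω (n + 1)).sign ≠ lastSign ω n then 1 else 0 := by
        split_ifs with h
        · rw [← Finset.card_insert_of_notMem hmem]
          congr 1
          ext p
          rw [mem_changePairs_succ, key, Finset.mem_insert, or_comm]
          simp [hcond.2 h]
        · rw [Nat.add_zero]
          congr 1
          ext p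
          rw [mem_changePairs_succ, key]
          simp [hcond, h]
      rw [hcard, changesFromPos]
      omega

theorem psum_zero {n : ℕ} (w : Fin n → Fin 3) : psum w 0 = 0 := by
  simp [psum]

theorem psum_snoc_of_le {n : ℕ} (w : Fin n → Fin 3) (s : Fin 3) {j : ℕ} (hj : j ≤ n) :
    psum (Fin.snoc w s : Fin (n + 1) → Fin 3) j = psum w j := by
  simp only [psum, Finset.sum_filter, Fin.sum_univ_castSucc, Fin.snoc_castSucc, Fin.snoc_last,
    Fin.val_castSucc, Fin.val_last]
  simp [Nat.not_lt.2 hj]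

theorem psum_snoc_last {n : ℕ} (w : Fin n → Fin 3) (s : Fin 3) :
    psum (Fin.snoc w s : Fin (n + 1) → Fin 3) (n + 1) = psum w n + stepVal s := by
  simp only [psum, Finset.sum_filter, Fin.sum_univ_castSucc, Fin.snoc_castSucc, Fin.snoc_last,
    Fin.val_castSucc, Fin.val_last]
  congr 1
  · refine Finset.sum_congr rfl fun i _ => ?_
    simp [i.isLt, Nat.lt_succ_of_lt i.isLt]
  · simp

theorem walkWeight_snoc (pm p0 p1 : ℝ) {n : ℕ} (w : Fin n → Fin 3) (s : Fin 3) :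
    walkWeight pm p0 p1 (Fin.snoc w s : Fin (n + 1) → Fin 3) =
      walkWeight pm p0 p1 w * stepWeight pm p0 p1 s := by
  simp [walkWeight, Fin.prod_univ_castSucc]

theorem sum_walks_succ {n : ℕ} (f : (Fin (n + 1) → Fin 3) → ℝ) :
    ∑ w, f w = ∑ w : Fin n → Fin 3, ∑ s, f (Fin.snoc w s) := by
  rw [← (Fin.snocEquiv fun _ => Fin 3).sum_comp, Fintype.sum_prod_type, Finset.sum_comm]
  rfl

/-- The value, in terms of a solution `φ` of the symmetric walk recurrence, attached to a walk
ending at `y` with last sign `s` after `c` sign changes when `J` sign changes are required. -/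
noncomputable def potential (φ : ℤ → ℝ) (r : ℝ) (J : ℕ) (y s : ℤ) (c : ℕ) : ℝ :=
  r ^ (-y) * φ (s * y + 2 * ((J - c : ℕ) : ℤ))

theorem apply_next_state {φ : ℤ → ℝ} (heven : ∀ y, φ (-y) = φ y) (J c : ℕ) {y l v : ℤ}
    (hl : l = 1 ∨ l = -1) (hpos : 0 < y → l = 1) (hneg : y < 0 → l = -1)
    (hv : v = -1 ∨ v = 0 ∨ v = 1) :
    φ ((if y + v = 0 then l else (y + v).sign) * (y + v) + 2 * ((J -
        (c + if y + v ≠ 0 ∧ (y + v).sign ≠ l then 1 else 0) : ℕ) : ℤ)) =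
      φ (l * (y + v) + 2 * ((J - c : ℕ) : ℤ)) := by
  by_cases hz : y + v = 0
  · simp [hz]
  by_cases hs : (y + v).sign = l
  · simp [hz, hs]
  · have hy : y = 0 := by
      rcases lt_trichotomy y 0 with h | h | h
      · exact absurd ((Int.sign_eq_neg_one_of_neg (by omega)).trans (hneg h).symm) hs
      · exact h
      · exact absurd ((Int.sign_eq_one_of_pos (by omega)).trans (hpos h).symm) hs
    subst hy
    have hv' : v = -l ∧ l * l = 1 := by
      rcases hl with rfl | rfl <;> rcases hv with rfl | rfl | rfl <;>
        first | exact ⟨rfl, rfl⟩ | exact absurd rfl hs | exact absurd rfl hz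
    obtain ⟨rfl, hll⟩ := hv'
    have hsign : (-l).sign = -l := by rcases hl with rfl | rfl <;> rfl
    simp only [zero_add] at hz hs ⊢
    rw [hsign] at hs
    simp only [hz, hs, hsign, ne_eq, not_false_eq_true, and_self, if_true, if_false]
    rcases le_or_gt J c with h | h
    · rw [Nat.sub_eq_zero_of_le h, Nat.sub_eq_zero_of_le (by omega), ← heven]
      congr 1
      simp
    · congr 1
      have : ((J - c : ℕ) : ℤ) = ((J - (c + 1) : ℕ) : ℤ) + 1 := by omega
      rw [this]
      linear_combination 2 * hll

theorem sum_potential_snoc {a p0 r : ℝ} (hr : 0 < r) {φ ψ : ℤ → ℝ}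
    (hrec : ∀ y, ψ y = a * φ (y + 1) + p0 * φ y + a * φ (y - 1))
    (heven : ∀ y, φ (-y) = φ y) (J : ℕ) {n : ℕ} (w : Fin n → Fin 3) :
    ∑ s, stepWeight (a / r) p0 (a * r) s *
        potential φ r J (psum (Fin.snoc w s : Fin (n + 1) → Fin 3) (n + 1))
          (lastSign (psum (Fin.snoc w s : Fin (n + 1) → Fin 3)) (n + 1))
          (changesFromPos (psum (Fin.snoc w s : Fin (n + 1) → Fin 3)) (n + 1)) =
      potential ψ r J (psum w n) (lastSign (psum w) n) (changesFromPos (psum w) n) := by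
  have hls : ∀ s, lastSign (psum (Fin.snoc w s : Fin (n + 1) → Fin 3)) n =
      lastSign (psum w) n := fun s => lastSign_congr fun i hi => psum_snoc_of_le w s hi
  have hch : ∀ s, changesFromPos (psum (Fin.snoc w s : Fin (n + 1) → Fin 3)) n =
      changesFromPos (psum w) n := fun s => changesFromPos_congr fun i hi => psum_snoc_of_le w s hi
  simp only [lastSign, changesFromPos, hls, hch, psum_snoc_last]
  have hpos := fun h => lastSign_of_pos (psum_zero w) (n := n) h
  have hneg := fun h => lastSign_of_neg (psum_zero w) (n := n) h
  have hor := lastSign_eq_or (psum w) n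
  generalize lastSign (psum w) n = l at *
  generalize changesFromPos (psum w) n = c at *
  generalize psum w n = y at *
  have key := fun v hv => apply_next_state heven J c (v := v) hor hpos hneg hv
  rw [Fin.sum_univ_three]
  simp only [potential, key (stepVal 0) (by simp [stepVal]), key (stepVal 1) (by simp [stepVal]),
    key (stepVal 2) (by simp [stepVal]), hrec]
  have e0 : stepVal 0 = -1 := rfl
  have e1 : stepVal 1 = 0 := rfl
  have e2 : stepVal 2 = 1 := rfl
  have w0 : stepWeight (a / r) p0 (a * r) 0 = a / r := rfl
  have w1 : stepWeight (a / r) p0 (a * r) 1 = p0 := rfl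
  have w2 : stepWeight (a / r) p0 (a * r) 2 = a * r := rfl
  rw [e0, e1, e2, w0, w1, w2, neg_add, neg_add, neg_add, zpow_add₀ hr.ne', zpow_add₀ hr.ne',
    zpow_add₀ hr.ne']
  simp only [neg_neg, neg_zero, zpow_one, zpow_zero, zpow_neg_one, add_zero, mul_one]
  rcases hor with rfl | rfl
  · have h1 : 1 * (y + -1) + 2 * ((J - c : ℕ) : ℤ) = 1 * y + 2 * ((J - c : ℕ) : ℤ) - 1 := by ring
    have h2 : 1 * (y + 1) + 2 * ((J - c : ℕ) : ℤ) = 1 * y + 2 * ((J - c : ℕ) : ℤ) + 1 := by ring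
    rw [h1, h2]
    field_simp
    ring
  · have h1 : -1 * (y + -1) + 2 * ((J - c : ℕ) : ℤ) = -1 * y + 2 * ((J - c : ℕ) : ℤ) + 1 := by ring
    have h2 : -1 * (y + 1) + 2 * ((J - c : ℕ) : ℤ) = -1 * y + 2 * ((J - c : ℕ) : ℤ) - 1 := by ring
    rw [h1, h2]
    field_simp

theorem sum_walkWeight_mul_potential {a p0 r : ℝ} (hr : 0 < r) {φ : ℕ → ℤ → ℝ}
    (hrec : ∀ n y, φ (n + 1) y = a * φ n (y + 1) + p0 * φ n y + a * φ n (y - 1))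
    (heven : ∀ n y, φ n (-y) = φ n y) (J n m : ℕ) :
    ∑ w : Fin n → Fin 3, walkWeight (a / r) p0 (a * r) w *
        potential (φ m) r J (psum w n) (lastSign (psum w) n) (changesFromPos (psum w) n) =
      φ (n + m) (2 * J) := by
  induction n generalizing m with
  | zero => simp [walkWeight, potential, psum, changesFromPos]
  | succ n ih =>
    rw [sum_walks_succ]
    simp only [walkWeight_snoc, mul_assoc, ← Finset.mul_sum]
    simp only [sum_potential_snoc hr (hrec m) (heven m)]
    rw [ih (m + 1)]
    congr 1
    omega

/-- Total weight of bridges with at least `J` sign changes, for a positive initial sign. -/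
theorem sum_bridges_changesFromPos {a p0 r : ℝ} (hr : 0 < r) {φ : ℕ → ℤ → ℝ}
    (hrec : ∀ n y, φ (n + 1) y = a * φ n (y + 1) + p0 * φ n y + a * φ n (y - 1))
    (heven : ∀ n y, φ n (-y) = φ n y) (hzero : ∀ y, φ 0 y = if y = 0 then 1 else 0) (J n : ℕ) :
    ∑ w : Fin n → Fin 3 with psum w n = 0 ∧ J ≤ changesFromPos (psum w) n,
      walkWeight (a / r) p0 (a * r) w = φ n (2 * J) := by
  rw [← Nat.add_zero n, ← sum_walkWeight_mul_potential hr hrec heven J n 0, Finset.sum_filter]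
  refine Finset.sum_congr rfl fun w _ => ?_
  have hpos := fun h => lastSign_of_pos (psum_zero w) (n := n) h
  have hneg := fun h => lastSign_of_neg (psum_zero w) (n := n) h
  simp only [potential, hzero, Nat.add_zero]
  have hiff : lastSign (psum w) n * psum w n +
      2 * ((J - changesFromPos (psum w) n : ℕ) : ℤ) = 0 ↔
      psum w n = 0 ∧ J ≤ changesFromPos (psum w) n := by
    rcases lt_trichotomy (psum w n) 0 with h | h | h
    · rw [hneg h]
      omega
    · rw [h, mul_zero]
      omega
    · rw [hpos h]
      omega
  by_cases h : psum w n = 0 ∧ J ≤ changesFromPos (psum w) n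
  · rw [if_pos h, if_pos (hiff.2 h), h.1]
    simp
  · rw [if_neg h, if_neg (mt hiff.1 h)]
    simp

theorem walkWeight_nonneg {pm p0 p1 : ℝ} (hpm : 0 ≤ pm) (hp0 : 0 ≤ p0) (hp1 : 0 ≤ p1) {n : ℕ}
    (w : Fin n → Fin 3) : 0 ≤ walkWeight pm p0 p1 w := by
  refine Finset.prod_nonneg fun i _ => ?_
  unfold stepWeight
  split_ifs <;> assumption

/-- The bridges with fewer than `K` sign changes carry the remaining weight of all bridges. -/
theorem sum_bridgeSignW (pm p0 p1 : ℝ) (n K : ℕ) :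
    ∑ k ∈ Finset.range K, bridgeSignW pm p0 p1 n k = bridgeW pm p0 p1 n -
      ∑ w : Fin n → Fin 3 with psum w n = 0 ∧ K ≤ signChanges w, walkWeight pm p0 p1 w := by
  unfold bridgeSignW bridgeW
  simp only [Finset.sum_filter]
  rw [Finset.sum_comm, ← Finset.sum_sub_distrib]
  refine Finset.sum_congr rfl fun w _ => ?_
  by_cases h : psum w n = 0
  · simp only [h, true_and, if_true, Finset.sum_ite_eq, Finset.mem_range]
    by_cases hK : signChanges w < K
    · simp [hK, Nat.not_le.2 hK]
    · simp [hK, Nat.not_lt.1 hK]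
  · simp [h]

theorem sum_bridgeSignW_bounds {a p0 r : ℝ} (ha : 0 < a) (hp0 : 0 < p0) (hr : 0 < r)
    {φ : ℕ → ℤ → ℝ}
    (hrec : ∀ n y, φ (n + 1) y = a * φ n (y + 1) + p0 * φ n y + a * φ n (y - 1))
    (heven : ∀ n y, φ n (-y) = φ n y) (hzero : ∀ y, φ 0 y = if y = 0 then 1 else 0) (n K : ℕ) :
    bridgeW (a / r) p0 (a * r) n = φ n 0 ∧
      φ n 0 - φ n (2 * K) ≤ ∑ k ∈ Finset.range K, bridgeSignW (a / r) p0 (a * r) n k ∧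
      ∑ k ∈ Finset.range K, bridgeSignW (a / r) p0 (a * r) n k ≤
        φ n 0 - φ n (2 * (K + 1 : ℕ)) := by
  have hb : bridgeW (a / r) p0 (a * r) n = φ n 0 := by
    simpa [bridgeW] using sum_bridges_changesFromPos hr hrec heven hzero 0 n
  have hnn : ∀ w : Fin n → Fin 3, 0 ≤ walkWeight (a / r) p0 (a * r) w :=
    walkWeight_nonneg (by positivity) hp0.le (by positivity)
  have hch := fun w : Fin n → Fin 3 => card_changePairs_le_changesFromPos (psum_zero w) n
  refine ⟨hb, ?_, ?_⟩
  · rw [sum_bridgeSignW, hb, ← sum_bridges_changesFromPos hr hrec heven hzero K n]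
    refine sub_le_sub_left (Finset.sum_le_sum_of_subset_of_nonneg ?_ fun w _ _ => hnn w) _
    intro w hw
    simp only [Finset.mem_filter, signChanges_eq_card_changePairs] at hw ⊢
    exact ⟨hw.1, hw.2.1, hw.2.2.trans (hch w).1⟩
  · rw [sum_bridgeSignW, hb, ← sum_bridges_changesFromPos hr hrec heven hzero (K + 1) n]
    refine sub_le_sub_left (Finset.sum_le_sum_of_subset_of_nonneg ?_ fun w _ _ => hnn w) _
    intro w hw
    simp only [Finset.mem_filter, signChanges_eq_card_changePairs] at hw ⊢
    have := (hch w).2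
    exact ⟨hw.1, hw.2.1, by omega⟩

/-- Weight of the walks of length `n` with step weights `a, p0, a` that end at `y`, written as a
Fourier coefficient. -/
noncomputable def fourierWeight (a p0 : ℝ) (n : ℕ) (y : ℝ) : ℝ :=
  (2 * Real.pi)⁻¹ * ∫ θ in -Real.pi..Real.pi, (p0 + 2 * a * Real.cos θ) ^ n * Real.cos (y * θ)

theorem fourierWeight_succ (a p0 : ℝ) (n : ℕ) (y : ℝ) :
    fourierWeight a p0 (n + 1) y = a * fourierWeight a p0 n (y + 1) +
      p0 * fourierWeight a p0 n y + a * fourierWeight a p0 n (y - 1) := by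
  have hi : ∀ z : ℝ, IntervalIntegrable
      (fun θ => (p0 + 2 * a * Real.cos θ) ^ n * Real.cos (z * θ)) MeasureTheory.volume
      (-Real.pi) Real.pi := fun z => (by fun_prop : Continuous _).intervalIntegrable _ _
  have key : ∫ θ in -Real.pi..Real.pi,
      (p0 + 2 * a * Real.cos θ) ^ (n + 1) * Real.cos (y * θ) =
      a * (∫ θ in -Real.pi..Real.pi, (p0 + 2 * a * Real.cos θ) ^ n * Real.cos ((y + 1) * θ)) +
      p0 * (∫ θ in -Real.pi..Real.pi, (p0 + 2 * a * Real.cos θ) ^ n * Real.cos (y * θ)) +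
      a * ∫ θ in -Real.pi..Real.pi, (p0 + 2 * a * Real.cos θ) ^ n * Real.cos ((y - 1) * θ) := by
    simp only [← intervalIntegral.integral_const_mul]
    rw [← intervalIntegral.integral_add ((hi _).const_mul _) ((hi _).const_mul _),
      ← intervalIntegral.integral_add
        (((hi _).const_mul _).add ((hi _).const_mul _)) ((hi _).const_mul _)]
    refine intervalIntegral.integral_congr fun θ _ => ?_
    simp only [add_mul, sub_mul, one_mul, Real.cos_add, Real.cos_sub]
    ring
  unfold fourierWeight
  rw [key]
  ring

theorem fourierWeight_neg (a p0 : ℝ) (n : ℕ) (y : ℝ) :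
    fourierWeight a p0 n (-y) = fourierWeight a p0 n y := by
  simp [fourierWeight]

theorem fourierWeight_zero (a p0 : ℝ) (y : ℤ) :
    fourierWeight a p0 0 y = if y = 0 then 1 else 0 := by
  have hpi := Real.pi_pos
  unfold fourierWeight
  split_ifs with h
  · subst h
    simp
    field_simp
    norm_num
  · have hy : (y : ℝ) ≠ 0 := by exact_mod_cast h
    simp only [pow_zero, one_mul]
    rw [intervalIntegral.integral_comp_mul_left Real.cos hy, integral_cos]
    simp

theorem abs_one_sub_mul_one_sub_cos_le {q θ : ℝ} (hq0 : 0 < q) (hq1 : q < 1)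
    (hθ : |θ| ≤ Real.pi) :
    |1 - q * (1 - Real.cos θ)| ≤ Real.exp (-(min q (1 - q) * (2 / Real.pi ^ 2)) * θ ^ 2) := by
  have h1 := Real.cos_le_one_sub_mul_cos_sq hθ
  have h2 := Real.neg_one_le_cos θ
  have h3 := Real.cos_le_one θ
  have hδ : 0 < min q (1 - q) := lt_min hq0 (by linarith)
  have hδq : min q (1 - q) ≤ q := min_le_left _ _
  have hδq' : min q (1 - q) ≤ 1 - q := min_le_right _ _
  generalize min q (1 - q) = δ at *
  have h4 : |1 - q * (1 - Real.cos θ)| ≤ 1 - δ * (1 - Real.cos θ) := by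
    rw [abs_le]
    constructor <;> nlinarith
  have h5 : 1 - δ * (1 - Real.cos θ) ≤ -(δ * (2 / Real.pi ^ 2)) * θ ^ 2 + 1 := by
    nlinarith
  exact h4.trans (h5.trans (Real.add_one_le_exp _))

open Filter Topology MeasureTheory in
theorem tendsto_mul_one_sub_cos (θ : ℝ) :
    Tendsto (fun n : ℕ => (n : ℝ) * (1 - Real.cos (θ / √n))) atTop (𝓝 (θ ^ 2 / 2)) := by
  rw [tendsto_iff_norm_sub_tendsto_zero]
  have hlim : Tendsto (fun n : ℕ => θ ^ 4 * (5 / 96) / (n : ℝ)) atTop (𝓝 0) :=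
    tendsto_const_div_atTop_nhds_zero_nat _
  refine squeeze_zero' (Eventually.of_forall fun _ => norm_nonneg _) ?_ hlim
  filter_upwards [eventually_ge_atTop (⌈θ ^ 2⌉₊ + 1)] with n hn
  have hn0 : (0 : ℝ) < n := by exact_mod_cast (by omega : 0 < n)
  have hle : θ ^ 2 ≤ n := (Nat.le_ceil _).trans (by exact_mod_cast (by omega : ⌈θ ^ 2⌉₊ ≤ n))
  have hs : √(n : ℝ) ^ 2 = n := Real.sq_sqrt hn0.le
  have hx : (θ / √n) ^ 2 = θ ^ 2 / n := by rw [div_pow, hs]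
  have habs : |θ / √n| ≤ 1 := by
    rw [← sq_le_one_iff_abs_le_one, hx]
    exact (div_le_one hn0).2 hle
  have hb := Real.cos_bound habs
  have h4 : |θ / √n| ^ 4 = θ ^ 4 / n ^ 2 := by
    rw [show |θ / √n| ^ 4 = ((θ / √n) ^ 2) ^ 2 by rw [← sq_abs (θ / √n)]; ring, hx]
    ring
  rw [h4, hx] at hb
  have he : (n : ℝ) * (1 - Real.cos (θ / √n)) - θ ^ 2 / 2 =
      -(n * (Real.cos (θ / √n) - (1 - θ ^ 2 / n / 2))) := by
    field_simp
    ring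
  rw [he, norm_neg, norm_mul, Real.norm_eq_abs, Real.norm_eq_abs, abs_of_pos hn0]
  calc (n : ℝ) * |Real.cos (θ / √n) - (1 - θ ^ 2 / n / 2)| ≤ n * (θ ^ 4 / n ^ 2 * (5 / 96)) := by
        gcongr
    _ = θ ^ 4 * (5 / 96) / n := by
        field_simp

open Filter Topology MeasureTheory in
theorem tendsto_sqrt_mul_integral {q t : ℝ} (hq0 : 0 < q) (hq1 : q < 1) {m : ℕ → ℝ}
    (hm : Tendsto (fun n : ℕ => m n / √n) atTop (𝓝 t)) :
    Tendsto (fun n : ℕ => √n * ∫ θ in -Real.pi..Real.pi,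
        (1 - q * (1 - Real.cos θ)) ^ n * Real.cos (m n * θ)) atTop
      (𝓝 (∫ θ : ℝ, Real.exp (-(q / 2) * θ ^ 2) * Real.cos (t * θ))) := by
  set κ : ℝ := min q (1 - q) * (2 / Real.pi ^ 2) with hκ
  have hκ0 : 0 < κ := by
    have : 0 < min q (1 - q) := lt_min hq0 (by linarith)
    have := Real.pi_pos
    positivity
  set F : ℕ → ℝ → ℝ := fun n => Set.indicator (Set.Ioc (-Real.pi * √n) (Real.pi * √n))
    fun θ => (1 - q * (1 - Real.cos (θ / √n))) ^ n * Real.cos (m n * (θ / √n)) with hF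
  have hdom : Tendsto (fun n => ∫ θ, F n θ) atTop
      (𝓝 (∫ θ : ℝ, Real.exp (-(q / 2) * θ ^ 2) * Real.cos (t * θ))) := by
    refine tendsto_integral_of_dominated_convergence (fun θ => Real.exp (-κ * θ ^ 2)) ?_
      (integrable_exp_neg_mul_sq hκ0) ?_ ?_
    · intro n
      refine Measurable.aestronglyMeasurable (Measurable.indicator ?_ measurableSet_Ioc)
      fun_prop
    · intro n
      refine Eventually.of_forall fun θ => ?_
      by_cases hθ : θ ∈ Set.Ioc (-Real.pi * √n) (Real.pi * √n)
      · have hn : 0 < √(n : ℝ) := by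
          by_contra h
          have h0 : √(n : ℝ) = 0 := le_antisymm (not_lt.1 h) (Real.sqrt_nonneg _)
          simp [h0] at hθ
        have hs : √(n : ℝ) ^ 2 = n := Real.sq_sqrt n.cast_nonneg
        have hπ : |θ / √n| ≤ Real.pi := by
          rw [abs_div, abs_of_pos hn, div_le_iff₀ hn, abs_le]
          exact ⟨by linarith [hθ.1], hθ.2⟩
        simp only [hF, Set.indicator_of_mem hθ, norm_mul, norm_pow, Real.norm_eq_abs]
        calc |1 - q * (1 - Real.cos (θ / √n))| ^ n * |Real.cos (m n * (θ / √n))|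
            ≤ Real.exp (-κ * (θ / √n) ^ 2) ^ n * 1 := by
              gcongr
              · exact abs_one_sub_mul_one_sub_cos_le hq0 hq1 hπ
              · exact Real.abs_cos_le_one _
          _ = Real.exp (-κ * θ ^ 2) := by
              have hn' : (n : ℝ) ≠ 0 := by rw [← hs]; positivity
              rw [mul_one, ← Real.exp_nat_mul, div_pow, hs]
              congr 1
              field_simp
      · simp only [hF, Set.indicator_of_notMem hθ, norm_zero]
        positivity
    · refine Eventually.of_forall fun θ => ?_
      have hsq : Tendsto (fun n : ℕ => √(n : ℝ)) atTop atTop :=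
        Real.tendsto_sqrt_atTop.comp tendsto_natCast_atTop_atTop
      have hpow : Tendsto (fun n : ℕ => (1 + -(q * (1 - Real.cos (θ / √n)))) ^ n) atTop
          (𝓝 (Real.exp (-(q / 2) * θ ^ 2))) := by
        refine Real.tendsto_one_add_pow_exp_of_tendsto ?_
        convert! (tendsto_mul_one_sub_cos θ).const_mul (-q) using 2
        · ring
        · ring
      have hcos : Tendsto (fun n : ℕ => Real.cos (m n * (θ / √n))) atTop
          (𝓝 (Real.cos (t * θ))) := by
        refine (Real.continuous_cos.tendsto _).comp ((hm.mul_const θ).congr fun n => ?_)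
        ring
      refine (hpow.mul hcos).congr' ?_
      filter_upwards [hsq.eventually_gt_atTop (|θ| / Real.pi)] with n hn
      rw [div_lt_iff₀ Real.pi_pos] at hn
      have hmem : θ ∈ Set.Ioc (-Real.pi * √n) (Real.pi * √n) :=
        ⟨by linarith [neg_abs_le θ], by linarith [le_abs_self θ]⟩
      simp only [hF, Set.indicator_of_mem hmem, ← sub_eq_add_neg]
  refine hdom.congr' ?_
  filter_upwards [eventually_gt_atTop 0] with n hn
  have hn' : √(n : ℝ) ≠ 0 := by positivity
  have hle : -Real.pi * √n ≤ Real.pi * √n := by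
    have := mul_nonneg Real.pi_pos.le (Real.sqrt_nonneg n)
    linarith
  rw [hF, integral_indicator measurableSet_Ioc, ← intervalIntegral.integral_of_le hle,
    intervalIntegral.integral_comp_div
      (fun θ => (1 - q * (1 - Real.cos θ)) ^ n * Real.cos (m n * θ)) hn', smul_eq_mul,
    mul_div_assoc, mul_div_assoc, div_self hn', mul_one, mul_one]

theorem integral_gaussian_mul_cos {b : ℝ} (hb : 0 < b) (t : ℝ) :
    ∫ θ : ℝ, Real.exp (-b * θ ^ 2) * Real.cos (t * θ) =
      √(Real.pi / b) * Real.exp (-t ^ 2 / (4 * b)) := by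
  have h := fourierIntegral_gaussian (b := (b : ℂ)) (by simpa using hb) (t : ℂ)
  have hint : MeasureTheory.Integrable
      (fun x : ℝ => Complex.exp (Complex.I * t * x) * Complex.exp (-(b : ℂ) * x ^ 2)) := by
    refine ((integrable_cexp_neg_mul_sq (b := (b : ℂ)) (by simpa using hb)).bdd_mul
      (c := 1) (by fun_prop) ?_)
    refine Filter.Eventually.of_forall fun x => le_of_eq ?_
    rw [show Complex.I * t * x = ((t * x : ℝ) : ℂ) * Complex.I by push_cast; ring]
    exact Complex.norm_exp_ofReal_mul_I _
  have hre := (integral_re hint).trans (congrArg Complex.re h)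
  have hint_re : ∀ x : ℝ, RCLike.re
      (Complex.exp (Complex.I * t * x) * Complex.exp (-(b : ℂ) * x ^ 2)) =
      Real.exp (-b * x ^ 2) * Real.cos (t * x) := by
    intro x
    rw [show Complex.I * t * x = ((t * x : ℝ) : ℂ) * Complex.I by push_cast; ring,
      show -(b : ℂ) * x ^ 2 = ((-b * x ^ 2 : ℝ) : ℂ) by push_cast; ring, ← Complex.ofReal_exp,
      RCLike.re_eq_complex_re, Complex.re_mul_ofReal, Complex.exp_ofReal_mul_I_re, mul_comm]
  simp only [hint_re] at hre
  rw [hre, Real.sqrt_eq_rpow]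
  have hrhs : ((Real.pi : ℂ) / b) ^ (1 / 2 : ℂ) * Complex.exp (-(t : ℂ) ^ 2 / (4 * b)) =
      (((Real.pi / b) ^ (1 / 2 : ℝ) * Real.exp (-t ^ 2 / (4 * b)) : ℝ) : ℂ) := by
    push_cast [Complex.ofReal_cpow (div_pos Real.pi_pos hb).le]
    rfl
  rw [hrhs, Complex.ofReal_re]

/-- Local limit theorem, in the form of a ratio of weights. -/
theorem tendsto_fourierWeight_ratio {a p0 t : ℝ} (ha : 0 < a) (hp0 : 0 < p0) {m : ℕ → ℝ}
    (hm : Filter.Tendsto (fun n : ℕ => m n / √n) Filter.atTop (nhds t)) :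
    Filter.Tendsto (fun n : ℕ => fourierWeight a p0 n (m n) / fourierWeight a p0 n 0)
      Filter.atTop (nhds (Real.exp (-t ^ 2 / (2 * (2 * a / (p0 + 2 * a)))))) := by
  set P := p0 + 2 * a with hP
  have hP0 : 0 < P := by positivity
  set q := 2 * a / P with hq
  have hq0 : 0 < q := by positivity
  have hq1 : q < 1 := (div_lt_one hP0).2 (by linarith)
  have hpi := Real.pi_pos
  have h0 : Filter.Tendsto (fun n : ℕ => (0 : ℝ) / √n) Filter.atTop (nhds 0) := by simp
  have hnum := tendsto_sqrt_mul_integral hq0 hq1 hm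
  have hden := tendsto_sqrt_mul_integral hq0 hq1 (m := fun _ => 0) h0
  rw [integral_gaussian_mul_cos (half_pos hq0)] at hnum hden
  have hs : √(Real.pi / (q / 2)) ≠ 0 := by positivity
  have hlim := hnum.div hden (by simpa using hs)
  have hval : √(Real.pi / (q / 2)) * Real.exp (-t ^ 2 / (4 * (q / 2))) /
      (√(Real.pi / (q / 2)) * Real.exp (-0 ^ 2 / (4 * (q / 2)))) =
      Real.exp (-t ^ 2 / (2 * q)) := by
    rw [mul_div_mul_left _ _ hs, show 4 * (q / 2) = 2 * q by ring]
    simp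
  rw [hval] at hlim
  refine hlim.congr' ?_
  filter_upwards [Filter.eventually_gt_atTop 0] with n hn
  have hn' : √(n : ℝ) ≠ 0 := by positivity
  have hfw : ∀ y : ℝ, fourierWeight a p0 n y = ((2 * Real.pi)⁻¹ * P ^ n) *
      ∫ θ in -Real.pi..Real.pi, (1 - q * (1 - Real.cos θ)) ^ n * Real.cos (y * θ) := by
    intro y
    unfold fourierWeight
    rw [mul_assoc, ← intervalIntegral.integral_const_mul (P ^ n)]
    congr 1
    refine intervalIntegral.integral_congr fun θ _ => ?_
    have : p0 + 2 * a * Real.cos θ = P * (1 - q * (1 - Real.cos θ)) := by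
      rw [hq]
      field_simp
      rw [hP]
      ring
    simp only [this]
    rw [mul_pow, mul_assoc]
  have hc : (2 * Real.pi)⁻¹ * P ^ n ≠ 0 := by positivity
  simp only [Pi.div_apply]
  rw [hfw, hfw, mul_div_mul_left _ _ hc, mul_div_mul_left _ _ hn']

theorem tendsto_floor_mul_sqrt_add_div {x : ℝ} (hx : 0 ≤ x) (c : ℕ) :
    Filter.Tendsto (fun n : ℕ => 2 * ((⌊x * √n⌋₊ + c : ℕ) : ℝ) / √n) Filter.atTop
      (nhds (2 * x)) := by
  have hsq : Filter.Tendsto (fun n : ℕ => √(n : ℝ)) Filter.atTop Filter.atTop :=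
    Real.tendsto_sqrt_atTop.comp tendsto_natCast_atTop_atTop
  have h := ((tendsto_nat_floor_mul_div_atTop hx).comp hsq).add
    (hsq.const_div_atTop (c : ℝ))
  rw [add_zero] at h
  refine (h.const_mul 2).congr fun n => ?_
  simp only [Function.comp_apply]
  push_cast
  ring

/-- **Limit law for sign changes of Motzkin bridges**: `X_n/√n` converges in
distribution to the Rayleigh law `R(σ)` with `σ = (τ/2)√(P″(τ)/P(τ))`. -/
theorem bridges_sign_changes_rayleigh (pm p0 p1 : ℝ)
    (hpm : 0 < pm) (hp0 : 0 < p0) (hp1 : 0 < p1) :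
    let τ : ℝ := Real.sqrt (pm / p1)
    let Pτ : ℝ := p0 + 2 * Real.sqrt (pm * p1)
    let P''τ : ℝ := 2 * pm / τ ^ 3
    let σ : ℝ := (τ / 2) * Real.sqrt (P''τ / Pτ)
    ∀ x : ℝ, 0 ≤ x →
      Filter.Tendsto
        (fun n : ℕ =>
          (∑ k ∈ Finset.range (⌊x * Real.sqrt n⌋₊ + 1), bridgeSignW pm p0 p1 n k) /
            bridgeW pm p0 p1 n)
        Filter.atTop
        (nhds (1 - Real.exp (-x ^ 2 / (2 * σ ^ 2)))) := by
  intro τ Pτ P''τ σ x hx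
  set a : ℝ := √(pm * p1) with ha
  set r : ℝ := √(p1 / pm) with hr
  have ha0 : 0 < a := by positivity
  have hr0 : 0 < r := by positivity
  have har : a = pm * r := by
    rw [ha, hr, Real.sqrt_eq_iff_mul_self_eq (by positivity) (by positivity)]
    rw [mul_mul_mul_comm, Real.mul_self_sqrt (div_pos hp1 hpm).le]
    field_simp
  have hrr : r * r = p1 / pm := Real.mul_self_sqrt (div_pos hp1 hpm).le
  have hpm_eq : pm = a / r := by
    rw [har]
    field_simp
  have hp1_eq : p1 = a * r := by
    rw [har, mul_assoc, hrr]
    field_simp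
  have hτ : τ = r⁻¹ := by
    simp only [τ, hr]
    rw [← Real.sqrt_inv, inv_div]
  have hσ : 2 * σ ^ 2 = a / (p0 + 2 * a) := by
    have hP : 0 ≤ P''τ / Pτ := by positivity
    simp only [σ]
    rw [mul_pow, Real.sq_sqrt hP]
    simp only [P''τ, Pτ]
    rw [← ha, hτ, har]
    field_simp
  have hlim : Real.exp (-(2 * x) ^ 2 / (2 * (2 * a / (p0 + 2 * a)))) =
      Real.exp (-x ^ 2 / (2 * σ ^ 2)) := by
    rw [hσ]
    congr 1
    field_simp
  have hratio : ∀ c : ℕ, Filter.Tendsto (fun n : ℕ => 1 -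
      fourierWeight a p0 n (2 * ((⌊x * √n⌋₊ + c : ℕ) : ℝ)) / fourierWeight a p0 n 0)
      Filter.atTop (nhds (1 - Real.exp (-x ^ 2 / (2 * σ ^ 2)))) := fun c => by
    rw [← hlim]
    exact (tendsto_fourierWeight_ratio ha0 hp0 (tendsto_floor_mul_sqrt_add_div hx c)).const_sub 1
  have hbounds := sum_bridgeSignW_bounds (φ := fun n y => fourierWeight a p0 n y) ha0 hp0 hr0
    (fun n y => by push_cast; exact fourierWeight_succ a p0 n y)
    (fun n y => by push_cast; exact fourierWeight_neg a p0 n y) (fourierWeight_zero a p0)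
  rw [← hpm_eq, ← hp1_eq] at hbounds
  have hpos : ∀ n, 0 < bridgeW pm p0 p1 n := by
    intro n
    have hterm : walkWeight pm p0 p1 (fun _ : Fin n => 1) = p0 ^ n := by
      simp [walkWeight, stepWeight]
    refine (pow_pos hp0 n).trans_le (hterm ▸ Finset.single_le_sum
      (fun w _ => walkWeight_nonneg hpm.le hp0.le hp1.le w) ?_)
    simp [psum, stepVal]
  refine tendsto_of_tendsto_of_tendsto_of_le_of_le (hratio 1) (hratio 2) (fun n => ?_) fun n => ?_
  · obtain ⟨hb, hl, -⟩ := hbounds n (⌊x * √n⌋₊ + 1)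
    have hp := hpos n
    push_cast at hb hl
    rw [hb] at hp ⊢
    rw [le_div_iff₀ hp, sub_mul, div_mul_cancel₀ _ hp.ne', one_mul]
    push_cast
    exact hl
  · obtain ⟨hb, -, hu⟩ := hbounds n (⌊x * √n⌋₊ + 1)
    have hp := hpos n
    push_cast at hb hu
    rw [hb] at hp ⊢
    rw [div_le_iff₀ hp, sub_mul, div_mul_cancel₀ _ hp.ne', one_mul]
    convert! hu using 3
    push_cast
    ring
end

section
/- Fix positive reals p₋₁, p₀, p₁ and let P(1) = p₋₁ + p₀ + p₁. A positive bridge is a bridge that is not a chain and whose last nonzero partial sum is positive (ω_j > 0 for j = max{l : ω_l ≠ 0}); a negative bridge is defined with ω_j < 0 instead. Let b⁺_{n,k} and b⁻_{n,k} denote the total weights of positive, respectively negative, bridges of length n with exactly k sign changes, and b_{n,k} the total weight of all bridges of length n with k sign changes. Then: (1) b⁺_{n,k} = b⁻_{n,k} = (b_{n,k} − χ_{n,k})/2 for all n, k, where χ_{n,0} = p₀ⁿ and χ_{n,k} = 0 for k ≥ 1; and (2) for all real z with 0 < z < 1/P(1) and all real u with 0 ≤ u ≤ 1, Σ_{n,k}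 b⁺_{n,k} zⁿ u^k = (E(z) − C(z))/(1 − u·E₁(z)), where C(z) = 1/(1−p₀z), E(z) = Σ_n e_n zⁿ is the generating function of positive excursions, and E₁(z) = E(z)/C(z) − 1. -/
open scoped BigOperators Classical

namespace MotzkinWalk

/-- The last nonzero partial sum of the walk is positive. -/
def LastPos {n : ℕ} (w : Fin n → Fin 3) : Prop :=
  ∃ j ∈ Finset.range (n + 1), 0 < psum w j ∧ ∀ l ∈ Finset.Ioc j n, psum w l = 0

/-- The last nonzero partial sum of the walk is negative. -/
def LastNeg {n : ℕ} (w : Fin n → Fin 3) : Prop :=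
  ∃ j ∈ Finset.range (n + 1), psum w j < 0 ∧ ∀ l ∈ Finset.Ioc j n, psum w l = 0

/-- All partial sums of the walk vanish, that is, the walk is a chain. -/
def IsFlat {n : ℕ} (w : Fin n → Fin 3) : Prop := ∀ j ≤ n, psum w j = 0

/-- The walk `w` followed by the step `s`. -/
def append {n : ℕ} (w : Fin n → Fin 3) (s : Fin 3) : Fin (n + 1) → Fin 3 :=
  Fin.snoc (α := fun _ => Fin 3) w s

theorem sum_append {n : ℕ} (f : (Fin (n + 1) → Fin 3) → ℝ) :
    ∑ w, f w = ∑ w : Fin n → Fin 3, ∑ s, f (append w s) := by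
  rw [← (Fin.snocEquiv (fun _ : Fin (n + 1) => Fin 3)).sum_comp f, Fintype.sum_prod_type_right]
  rfl

theorem psum_append_of_le {n : ℕ} (w : Fin n → Fin 3) (s : Fin 3) {j : ℕ} (hj : j ≤ n) :
    psum (append w s) j = psum w j := by
  simp [psum, append, Finset.sum_filter, Fin.sum_univ_castSucc, hj.not_gt]

theorem psum_append_last {n : ℕ} (w : Fin n → Fin 3) (s : Fin 3) :
    psum (append w s) (n + 1) = psum w n + stepVal s := by
  simp [psum, append, Finset.sum_filter, Fin.sum_univ_castSucc]

theorem walkWeight_append (pm p0 p1 : ℝ) {n : ℕ} (w : Fin n → Fin 3) (s : Fin 3) :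
    walkWeight pm p0 p1 (append w s) = walkWeight pm p0 p1 w * stepWeight pm p0 p1 s := by
  simp [walkWeight, append, Fin.prod_univ_castSucc]

theorem psum_zero {n : ℕ} (w : Fin n → Fin 3) : psum w 0 = 0 := by simp [psum]

theorem lastPos_append {n : ℕ} (w : Fin n → Fin 3) (s : Fin 3) :
    LastPos (append w s) ↔
      0 < psum w n + stepVal s ∨ (psum w n + stepVal s = 0 ∧ LastPos w) := by
  have hL := psum_append_last w s
  constructor
  · rintro ⟨j, hj, hpos, hz⟩
    simp only [Finset.mem_range, Finset.mem_Ioc] at hj hz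
    rcases Nat.lt_or_ge n j with h | h
    · obtain rfl : j = n + 1 := by omega
      left; omega
    · right
      refine ⟨by rw [← hL]; exact hz _ (by omega), j, by simp; omega, ?_, fun l hl => ?_⟩
      · rwa [psum_append_of_le w s h] at hpos
      · rw [Finset.mem_Ioc] at hl
        rw [← psum_append_of_le w s hl.2]; exact hz _ (by omega)
  · rintro (h | ⟨h, j, hj, hpos, hz⟩)
    · exact ⟨n + 1, by simp, by omega, fun l hl => by simp at hl⟩
    · simp only [Finset.mem_range, Finset.mem_Ioc] at hj hz
      refine ⟨j, by simp; omega, by rwa [psum_append_of_le w s (by omega)], fun l hl => ?_⟩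
      rw [Finset.mem_Ioc] at hl
      rcases Nat.lt_or_ge n l with h' | h'
      · obtain rfl : l = n + 1 := by omega
        omega
      · rw [psum_append_of_le w s h']; exact hz _ ⟨hl.1, h'⟩

theorem isFlat_append {n : ℕ} (w : Fin n → Fin 3) (s : Fin 3) :
    IsFlat (append w s) ↔ IsFlat w ∧ psum w n + stepVal s = 0 := by
  rw [← psum_append_last]
  constructor
  · exact fun h => ⟨fun j hj => by rw [← psum_append_of_le w s hj]; exact h j (by omega),
      h _ le_rfl⟩
  · rintro ⟨h, h'⟩ j hj
    rcases Nat.lt_or_ge n j with hn | hn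
    · obtain rfl : j = n + 1 := by omega
      exact h'
    · rw [psum_append_of_le w s hn]; exact h j hn

/-- Reflection of a walk in the horizontal axis. -/
def reflect {n : ℕ} (w : Fin n → Fin 3) : Fin n → Fin 3 := fun i => Fin.rev (w i)

theorem reflect_reflect {n : ℕ} (w : Fin n → Fin 3) : reflect (reflect w) = w := by
  funext i; simp [reflect]

theorem psum_reflect {n : ℕ} (w : Fin n → Fin 3) (j : ℕ) : psum (reflect w) j = -psum w j := by
  have h : ∀ s : Fin 3, stepVal (Fin.rev s) = -stepVal s := by decide
  simp [psum, reflect, h]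

theorem signChanges_reflect {n : ℕ} (w : Fin n → Fin 3) :
    signChanges (reflect w) = signChanges w := by
  simp [signChanges, psum_reflect]

theorem lastNeg_iff_lastPos_reflect {n : ℕ} (w : Fin n → Fin 3) :
    LastNeg w ↔ LastPos (reflect w) := by
  simp [LastNeg, LastPos, psum_reflect]

theorem append_reflect {n : ℕ} (w : Fin n → Fin 3) (s : Fin 3) :
    reflect (append w s) = append (reflect w) (Fin.rev s) := by
  funext i
  induction i using Fin.lastCases <;> simp [reflect, append]

theorem lastNeg_append {n : ℕ} (w : Fin n → Fin 3) (s : Fin 3) :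
    LastNeg (append w s) ↔
      psum w n + stepVal s < 0 ∨ (psum w n + stepVal s = 0 ∧ LastNeg w) := by
  have h : stepVal (Fin.rev s) = -stepVal s := by revert s; decide
  rw [lastNeg_iff_lastPos_reflect, append_reflect, lastPos_append, psum_reflect, h,
    lastNeg_iff_lastPos_reflect]
  constructor <;> rintro (h | h) <;> first | (left; omega) | exact Or.inr ⟨by omega, h.2⟩

/-- Every nonempty walk is a shorter walk followed by a step. -/
theorem append_cases {n : ℕ} (w : Fin (n + 1) → Fin 3) : ∃ w' s, w = append w' s :=
  ⟨Fin.init w, w (Fin.last n), (Fin.snoc_init_self w).symm⟩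

theorem trichotomy {n : ℕ} (w : Fin n → Fin 3) :
    (LastPos w ∧ ¬LastNeg w ∧ ¬IsFlat w) ∨ (¬LastPos w ∧ LastNeg w ∧ ¬IsFlat w) ∨
      (¬LastPos w ∧ ¬LastNeg w ∧ IsFlat w) := by
  induction n with
  | zero => right; right; simp [LastPos, LastNeg, IsFlat, psum_zero]
  | succ n ih =>
    obtain ⟨w, s, rfl⟩ := append_cases w
    have := ih w
    rw [lastPos_append, lastNeg_append, isFlat_append]
    rcases lt_trichotomy (psum w n + stepVal s) 0 with h | h | h
    · simp [h, h.not_gt, h.ne]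
    · simpa [h] using this
    · simp [h, h.not_gt, h.ne']

theorem LastPos.psum_nonneg {n : ℕ} {w : Fin n → Fin 3} (h : LastPos w) : 0 ≤ psum w n := by
  obtain ⟨j, hj, hpos, hz⟩ := h
  rcases (Nat.lt_succ_iff.1 (Finset.mem_range.1 hj)).eq_or_lt with rfl | h
  · exact hpos.le
  · exact (hz n (by simp [h])).ge

theorem LastPos.of_psum_pos {n : ℕ} {w : Fin n → Fin 3} (h : 0 < psum w n) : LastPos w :=
  ⟨n, by simp, h, by simp⟩

theorem LastNeg.psum_nonpos {n : ℕ} {w : Fin n → Fin 3} (h : LastNeg w) : psum w n ≤ 0 := by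
  have := ((lastNeg_iff_lastPos_reflect w).1 h).psum_nonneg
  rw [psum_reflect] at this
  omega

theorem signChanges_append {n : ℕ} (w : Fin n → Fin 3) (s : Fin 3) :
    signChanges (append w s) = signChanges w +
      if (0 < psum w n + stepVal s ∧ LastNeg w) ∨ (psum w n + stepVal s < 0 ∧ LastPos w)
        then 1 else 0 := by
  have hL := psum_append_last w s
  set v := append w s
  set t := psum w n + stepVal s
  have hle : ∀ {j}, j ≤ n → psum v j = psum w j := psum_append_of_le w s
  set old := ((Finset.range (n + 1)) ×ˢ (Finset.range (n + 1))).filter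
    (fun p => p.1 < p.2 ∧ psum w p.1 * psum w p.2 < 0 ∧
      ∀ l ∈ Finset.Ioo p.1 p.2, psum w l = 0)
  set new := (Finset.range (n + 1)).filter
    (fun i => psum w i * t < 0 ∧ ∀ l ∈ Finset.Ioc i n, psum w l = 0)
  have hsplit : ((Finset.range (n + 1 + 1)) ×ˢ (Finset.range (n + 1 + 1))).filter
      (fun p => p.1 < p.2 ∧ psum v p.1 * psum v p.2 < 0 ∧
        ∀ l ∈ Finset.Ioo p.1 p.2, psum v l = 0) = old ∪ new.image (fun i => (i, n + 1)) := by
    ext ⟨i, j⟩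
    simp only [old, new, Finset.mem_filter, Finset.mem_product, Finset.mem_range,
      Finset.mem_Ioo, Finset.mem_Ioc, Finset.mem_union, Finset.mem_image, Prod.mk.injEq]
    constructor
    · rintro ⟨⟨hi, hj⟩, hij, hneg, hz⟩
      rcases Nat.lt_or_ge n j with h | h
      · obtain rfl : j = n + 1 := by omega
        right
        refine ⟨i, ⟨hij, ?_, fun l hl => ?_⟩, rfl, rfl⟩
        · rwa [hL, hle (by omega)] at hneg
        · rw [← hle hl.2]; exact hz l (by omega)
      · left
        refine ⟨by omega, hij, ?_, fun l hl => ?_⟩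
        · rwa [hle h, hle (by omega)] at hneg
        · rw [← hle (by omega)]; exact hz l hl
    · rintro (⟨⟨hi, hj⟩, hij, hneg, hz⟩ | ⟨i', ⟨hi, hneg, hz⟩, rfl, rfl⟩)
      · refine ⟨by omega, hij, ?_, fun l hl => ?_⟩
        · rwa [hle (by omega), hle (by omega)]
        · rw [hle (by omega)]; exact hz l hl
      · refine ⟨by omega, hi, ?_, fun l hl => ?_⟩
        · rwa [hL, hle (by omega)]
        · rw [hle (by omega)]; exact hz l (by omega)
  have hdisj : Disjoint old (new.image (fun i => (i, n + 1))) := by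
    rw [Finset.disjoint_left]
    rintro ⟨i, j⟩ h h'
    simp only [old, Finset.mem_filter, Finset.mem_product, Finset.mem_range] at h
    simp only [Finset.mem_image, Prod.mk.injEq] at h'
    obtain ⟨_, _, _, rfl⟩ := h'
    omega
  have hcard : signChanges v = old.card + new.card := by
    rw [signChanges, hsplit, Finset.card_union_of_disjoint hdisj,
      Finset.card_image_of_injective _ (fun a b h => (Prod.mk.inj h).1)]
  have hone : new.card ≤ 1 := by
    rw [Finset.card_le_one]
    intro a ha b hb
    simp only [new, Finset.mem_filter, Finset.mem_range, Finset.mem_Ioc] at ha hb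
    by_contra hab
    rcases Nat.lt_or_gt_of_ne hab with h | h
    · simp [ha.2.2 b (by omega)] at hb
    · simp [hb.2.2 a (by omega)] at ha
  have hne : new.Nonempty ↔ (0 < t ∧ LastNeg w) ∨ (t < 0 ∧ LastPos w) := by
    constructor
    · rintro ⟨i, hi⟩
      simp only [new, Finset.mem_filter] at hi
      rcases mul_neg_iff.1 hi.2.1 with h | h
      · exact Or.inr ⟨h.2, i, hi.1, h.1, hi.2.2⟩
      · exact Or.inl ⟨h.2, i, hi.1, h.1, hi.2.2⟩
    · rintro (⟨ht, i, hi, h, hz⟩ | ⟨ht, i, hi, h, hz⟩)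
      · exact ⟨i, by simpa only [new, Finset.mem_filter] using ⟨hi, mul_neg_of_neg_of_pos h ht, hz⟩⟩
      · exact ⟨i, by simpa only [new, Finset.mem_filter] using ⟨hi, mul_neg_of_pos_of_neg h ht, hz⟩⟩
  rw [hcard]
  change old.card + new.card = old.card + _
  split_ifs with h
  · have := (hne.2 h).card_pos
    omega
  · have : ¬new.Nonempty := fun h' => h (hne.1 h')
    rw [Finset.not_nonempty_iff_eq_empty.1 this, Finset.card_empty]

theorem signChanges_of_isFlat {n : ℕ} {w : Fin n → Fin 3} (h : IsFlat w) :
    signChanges w = 0 := by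
  rw [signChanges, Finset.card_eq_zero, Finset.filter_eq_empty_iff]
  rintro ⟨i, j⟩ hij
  simp only [Finset.mem_product, Finset.mem_range] at hij
  simp [h i (by omega)]

theorem forall_psum_nonneg_iff {n : ℕ} (w : Fin n → Fin 3) :
    (∀ j ∈ Finset.range (n + 1), 0 ≤ psum w j) ↔
      (LastPos w ∧ signChanges w = 0) ∨ IsFlat w := by
  induction n with
  | zero => simp [IsFlat, psum_zero]
  | succ n ih =>
    obtain ⟨w, s, rfl⟩ := append_cases w
    have hstep : (∀ j ∈ Finset.range (n + 1 + 1), 0 ≤ psum (append w s) j) ↔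
        (∀ j ∈ Finset.range (n + 1), 0 ≤ psum w j) ∧ 0 ≤ psum w n + stepVal s := by
      simp only [Finset.mem_range, Order.lt_add_one_iff]
      rw [← psum_append_last]
      constructor
      · exact fun h => ⟨fun j hj => psum_append_of_le w s hj ▸ h j (by omega), h _ le_rfl⟩
      · rintro ⟨h, h'⟩ j hj
        rcases hj.eq_or_lt with rfl | hj
        · exact h'
        · rw [psum_append_of_le w s (by omega)]; exact h j (by omega)
    have htri := trichotomy w
    have hflat : IsFlat w → signChanges w = 0 := signChanges_of_isFlat
    rw [hstep, ih, lastPos_append, isFlat_append, signChanges_append]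
    rcases lt_trichotomy (psum w n + stepVal s) 0 with h | h | h
    · simp [h.not_ge, h.not_gt, h.ne]
    · simp [h]
    · have h0 : ¬ psum w n + stepVal s < 0 := h.not_gt
      simp only [h, h.le, h.ne', h0, true_and, false_and, or_false, and_true, and_false]
      by_cases hN : LastNeg w <;> simp [hN] <;> tauto

theorem isFlat_iff {n : ℕ} (w : Fin n → Fin 3) : IsFlat w ↔ w = fun _ => 1 := by
  induction n with
  | zero => simpa [IsFlat, psum_zero] using Subsingleton.elim w _
  | succ n ih =>
    obtain ⟨w, s, rfl⟩ := append_cases w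
    have hs : stepVal s = 0 ↔ s = 1 := by revert s; decide
    have happ : (append w s = fun _ => 1) ↔ (w = fun _ => 1) ∧ s = 1 := by
      simp only [funext_iff, Fin.forall_fin_succ']
      simp [append]
    rw [isFlat_append, happ, ← ih, ← hs]
    constructor
    · rintro ⟨h, h'⟩
      exact ⟨h, by rwa [h n le_rfl, zero_add] at h'⟩
    · rintro ⟨h, h'⟩
      exact ⟨h, by rw [h n le_rfl, h', zero_add]⟩

theorem sum_isFlat (pm p0 p1 : ℝ) (n : ℕ) :
    ∑ w : Fin n → Fin 3, (if IsFlat w then walkWeight pm p0 p1 w else 0) = p0 ^ n := by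
  simp [isFlat_iff, walkWeight, stepWeight]

theorem walkWeight_reflect {pm p1 : ℝ} (p0 : ℝ) (hpm : pm ≠ 0) (hp1 : p1 ≠ 0) {n : ℕ}
    (w : Fin n → Fin 3) :
    walkWeight pm p0 p1 (reflect w) = walkWeight pm p0 p1 w * (pm / p1) ^ psum w n := by
  induction n with
  | zero => simp [walkWeight, psum_zero]
  | succ n ih =>
    obtain ⟨w, s, rfl⟩ := append_cases w
    have hs : stepWeight pm p0 p1 (Fin.rev s) =
        stepWeight pm p0 p1 s * (pm / p1) ^ stepVal s := by
      fin_cases s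
      · simp [stepWeight, stepVal, Fin.rev]; field_simp
      · simp [stepWeight, stepVal, Fin.rev]
      · simp [stepWeight, stepVal, Fin.rev]; field_simp
    rw [append_reflect, walkWeight_append, walkWeight_append, ih, hs, psum_append_last,
      zpow_add₀ (div_ne_zero hpm hp1)]
    ring

theorem negBridgeSignW_eq {pm p1 : ℝ} (p0 : ℝ) (hpm : pm ≠ 0) (hp1 : p1 ≠ 0) (n k : ℕ) :
    negBridgeSignW pm p0 p1 n k = posBridgeSignW pm p0 p1 n k := by
  have hiff : ∀ w : Fin n → Fin 3, IsNegBridge w ↔ IsPosBridge (reflect w) := fun w =>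
    and_congr (by rw [psum_reflect, neg_eq_zero]) (lastNeg_iff_lastPos_reflect w)
  have hinv : Function.Involutive (reflect (n := n)) := reflect_reflect
  rw [negBridgeSignW, posBridgeSignW, Finset.sum_filter, Finset.sum_filter,
    ← Equiv.sum_comp hinv.toPerm]
  refine Finset.sum_congr rfl fun w _ => ?_
  simp only [Function.Involutive.coe_toPerm, signChanges_reflect, hiff, reflect_reflect]
  split_ifs with h
  · rw [walkWeight_reflect p0 hpm hp1, h.1.1, zpow_zero, mul_one]
  · rfl

theorem bridgeSignW_eq (pm p0 p1 : ℝ) (n k : ℕ) :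
    bridgeSignW pm p0 p1 n k = posBridgeSignW pm p0 p1 n k + negBridgeSignW pm p0 p1 n k +
      if k = 0 then p0 ^ n else 0 := by
  have hchi : (if k = 0 then p0 ^ n else 0) =
      ∑ w : Fin n → Fin 3, (if IsFlat w ∧ k = 0 then walkWeight pm p0 p1 w else 0) := by
    by_cases hk : k = 0
    · simp [hk, sum_isFlat]
    · simp [hk]
  rw [hchi, bridgeSignW, posBridgeSignW, negBridgeSignW, Finset.sum_filter, Finset.sum_filter,
    Finset.sum_filter, ← Finset.sum_add_distrib, ← Finset.sum_add_distrib]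
  refine Finset.sum_congr rfl fun w _ => ?_
  have hp : IsPosBridge w ↔ psum w n = 0 ∧ LastPos w := Iff.rfl
  have hn : IsNegBridge w ↔ psum w n = 0 ∧ LastNeg w := Iff.rfl
  simp only [hp, hn]
  rcases trichotomy w with h | h | h
  · simp [h]
  · simp [h]
  · simp [h, h.2.2 n le_rfl, signChanges_of_isFlat h.2.2, eq_comm]

/-- Total weight of the walks of length `n` with `k` sign changes that end at height `h` and
whose last nonzero partial sum is positive. -/
noncomputable def lastPosW (pm p0 p1 : ℝ) (n k : ℕ) (h : ℤ) : ℝ :=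
  ∑ w : Fin n → Fin 3,
    if LastPos w ∧ psum w n = h ∧ signChanges w = k then walkWeight pm p0 p1 w else 0

/-- The walk ends at height zero, and appending an up step gives a walk with `k` sign changes
for which this step leaves the nonpositive half-line. -/
def IsSource {n : ℕ} (k : ℕ) (w : Fin n → Fin 3) : Prop :=
  (IsNegBridge w ∧ signChanges w + 1 = k) ∨ (IsFlat w ∧ k = 0)

/-- Total weight of the walks in `IsSource k` of length `n`. -/
noncomputable def sourceW (pm p0 p1 : ℝ) (k n : ℕ) : ℝ :=
  ∑ w : Fin n → Fin 3, if IsSource k w then walkWeight pm p0 p1 w else 0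

theorem sourceW_zero (pm p0 p1 : ℝ) (n : ℕ) : sourceW pm p0 p1 0 n = p0 ^ n := by
  simp [sourceW, IsSource, sum_isFlat]

theorem sourceW_succ (pm p0 p1 : ℝ) (k n : ℕ) :
    sourceW pm p0 p1 (k + 1) n = negBridgeSignW pm p0 p1 n k := by
  simp [sourceW, IsSource, negBridgeSignW, Finset.sum_filter]

theorem lastPosW_of_neg (pm p0 p1 : ℝ) (n k : ℕ) {h : ℤ} (hh : h < 0) :
    lastPosW pm p0 p1 n k h = 0 := by
  refine Finset.sum_eq_zero fun w _ => if_neg ?_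
  rintro ⟨hw, rfl, -⟩
  exact hh.not_ge hw.psum_nonneg

theorem lastPosW_zero_left (pm p0 p1 : ℝ) (k : ℕ) (h : ℤ) : lastPosW pm p0 p1 0 k h = 0 := by
  simp [lastPosW, LastPos, psum_zero]

theorem posBridgeSignW_eq (pm p0 p1 : ℝ) (n k : ℕ) :
    posBridgeSignW pm p0 p1 n k = lastPosW pm p0 p1 n k 0 := by
  rw [posBridgeSignW, Finset.sum_filter]
  refine Finset.sum_congr rfl fun w _ => if_congr ?_ rfl rfl
  change (_ ∧ LastPos w) ∧ _ ↔ _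
  tauto

theorem state_append_down {n : ℕ} (w : Fin n → Fin 3) (k : ℕ) {h : ℤ} (hh : 0 ≤ h) :
    LastPos (append w 0) ∧ psum (append w 0) (n + 1) = h ∧ signChanges (append w 0) = k ↔
      LastPos w ∧ psum w n = h + 1 ∧ signChanges w = k := by
  have hpos : 0 < psum w n → LastPos w := LastPos.of_psum_pos
  have hnp : LastNeg w → psum w n ≤ 0 := LastNeg.psum_nonpos
  have hstep : stepVal 0 = -1 := rfl
  rw [lastPos_append, psum_append_last, signChanges_append]
  grind

theorem state_append_level {n : ℕ} (w : Fin n → Fin 3) (k : ℕ) (h : ℤ) :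
    LastPos (append w 1) ∧ psum (append w 1) (n + 1) = h ∧ signChanges (append w 1) = k ↔
      LastPos w ∧ psum w n = h ∧ signChanges w = k := by
  have hpos : 0 < psum w n → LastPos w := LastPos.of_psum_pos
  have hnp : LastNeg w → psum w n ≤ 0 := LastNeg.psum_nonpos
  have hnn : LastPos w → 0 ≤ psum w n := LastPos.psum_nonneg
  have hstep : stepVal 1 = 0 := rfl
  rw [lastPos_append, psum_append_last, signChanges_append]
  grind

theorem state_append_up {n : ℕ} (w : Fin n → Fin 3) (k : ℕ) (h : ℤ) :
    LastPos (append w 2) ∧ psum (append w 2) (n + 1) = h ∧ signChanges (append w 2) = k ↔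
      (LastPos w ∧ psum w n = h - 1 ∧ signChanges w = k) ∨ (h = 1 ∧ IsSource k w) := by
  have hneg : IsNegBridge w ↔ psum w n = 0 ∧ LastNeg w := Iff.rfl
  have hflat : IsFlat w → psum w n = 0 ∧ signChanges w = 0 := fun hw =>
    ⟨hw n le_rfl, signChanges_of_isFlat hw⟩
  have hpos : 0 < psum w n → LastPos w := LastPos.of_psum_pos
  have hnn : LastPos w → 0 ≤ psum w n := LastPos.psum_nonneg
  have hnp : LastNeg w → psum w n ≤ 0 := LastNeg.psum_nonpos
  have hstep : stepVal 2 = 1 := rfl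
  rw [lastPos_append, psum_append_last, signChanges_append, IsSource, hneg, hstep]
  rcases trichotomy w with ⟨hP, hN, hF⟩ | ⟨hP, hN, hF⟩ | ⟨hP, hN, hF⟩ <;>
    simp only [hP, hN, hF, true_and, false_and, and_true, and_false, or_false, false_or,
      forall_const] at * <;> grind

theorem not_lastPos_of_isSource {n k : ℕ} {w : Fin n → Fin 3} (h : IsSource k w) :
    ¬LastPos w := by
  have htri := trichotomy w
  rcases h with ⟨⟨-, hN⟩, -⟩ | ⟨hF, -⟩
  · have hN : LastNeg w := hN
    tauto
  · tauto

theorem lastPosW_succ (pm p0 p1 : ℝ) (n k : ℕ) {h : ℤ} (hh : 0 ≤ h) :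
    lastPosW pm p0 p1 (n + 1) k h =
      p1 * lastPosW pm p0 p1 n k (h - 1) + p0 * lastPosW pm p0 p1 n k h +
        pm * lastPosW pm p0 p1 n k (h + 1) + if h = 1 then p1 * sourceW pm p0 p1 k n else 0 := by
  have hsrc : (if h = 1 then p1 * sourceW pm p0 p1 k n else 0) =
      ∑ w : Fin n → Fin 3, p1 * if h = 1 ∧ IsSource k w then walkWeight pm p0 p1 w else 0 := by
    rw [← Finset.mul_sum]
    by_cases h1 : h = 1 <;> simp [h1, sourceW]
  rw [hsrc, lastPosW, sum_append]
  simp only [lastPosW, Finset.mul_sum, ← Finset.sum_add_distrib]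
  refine Finset.sum_congr rfl fun w _ => ?_
  simp only [Fin.sum_univ_three, state_append_down w k hh, state_append_level w k h,
    state_append_up w k h, walkWeight_append]
  have hw0 : stepWeight pm p0 p1 0 = pm := rfl
  have hw1 : stepWeight pm p0 p1 1 = p0 := rfl
  have hw2 : stepWeight pm p0 p1 2 = p1 := rfl
  rw [hw0, hw1, hw2]
  have hexcl : IsSource k w → ¬LastPos w := not_lastPos_of_isSource
  split_ifs <;> first | ring1 | tauto

/-- Weights of the walks of length `n` that start with an up step, stay nonnegative and end at
height `h`, defined through the last step. -/
noncomputable def upW (pm p0 p1 : ℝ) : ℕ → ℤ → ℝ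
  | 0, _ => 0
  | n + 1, h => if h < 0 then 0 else
      p1 * upW pm p0 p1 n (h - 1) + p0 * upW pm p0 p1 n h + pm * upW pm p0 p1 n (h + 1) +
        if n = 0 ∧ h = 1 then p1 else 0

theorem upW_nonneg {pm p0 p1 : ℝ} (hpm : 0 ≤ pm) (hp0 : 0 ≤ p0) (hp1 : 0 ≤ p1) (n : ℕ) (h : ℤ) :
    0 ≤ upW pm p0 p1 n h := by
  induction n generalizing h with
  | zero => simp [upW]
  | succ n ih =>
    have h1 := ih (h - 1)
    have h2 := ih h
    have h3 := ih (h + 1)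
    rw [upW]
    split_ifs <;> positivity

theorem lastPosW_eq_sum (pm p0 p1 : ℝ) (n k : ℕ) (h : ℤ) :
    lastPosW pm p0 p1 n k h =
      ∑ i ∈ Finset.range (n + 1), sourceW pm p0 p1 k i * upW pm p0 p1 (n - i) h := by
  induction n generalizing h with
  | zero => simp [lastPosW_zero_left, upW]
  | succ n ih =>
    rcases lt_or_ge h 0 with hh | hh
    · rw [lastPosW_of_neg _ _ _ _ _ hh]
      refine (Finset.sum_eq_zero fun i _ => ?_).symm
      rcases n + 1 - i with _ | m <;> simp [upW, hh]
    · have hlast : (if h = 1 then p1 * sourceW pm p0 p1 k n else 0) =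
          ∑ i ∈ Finset.range (n + 1),
            sourceW pm p0 p1 k i * if n - i = 0 ∧ h = 1 then p1 else 0 := by
        rw [Finset.sum_range_succ, Finset.sum_eq_zero]
        · by_cases h1 : h = 1 <;> simp [h1, mul_comm]
        · intro i hi
          rw [Finset.mem_range] at hi
          rw [if_neg (by omega), mul_zero]
      rw [lastPosW_succ _ _ _ _ _ hh, ih, ih, ih, Finset.sum_range_succ _ (n + 1), hlast,
        Finset.mul_sum, Finset.mul_sum, Finset.mul_sum, ← Finset.sum_add_distrib,
        ← Finset.sum_add_distrib, ← Finset.sum_add_distrib]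
      simp only [Nat.sub_self, upW, mul_zero, add_zero]
      refine Finset.sum_congr rfl fun i hi => ?_
      rw [Nat.succ_sub (by simpa [Nat.lt_succ_iff] using hi), upW, if_neg hh.not_gt]
      ring

theorem posExcW_eq (pm p0 p1 : ℝ) (n : ℕ) :
    posExcW pm p0 p1 n = posBridgeSignW pm p0 p1 n 0 + p0 ^ n := by
  rw [posExcW, posBridgeSignW_eq, lastPosW, Finset.sum_filter, ← sum_isFlat pm p0 p1 n,
    ← Finset.sum_add_distrib]
  refine Finset.sum_congr rfl fun w _ => ?_
  rw [forall_psum_nonneg_iff]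
  by_cases hw : IsFlat w
  · have : ¬LastPos w := by have := trichotomy w; tauto
    simp [hw, this, hw n le_rfl]
  · have : (psum w n = 0 ∧ LastPos w ∧ signChanges w = 0) ↔
      (LastPos w ∧ psum w n = 0 ∧ signChanges w = 0) := by tauto
    simp [hw, this]

theorem posBridgeSignW_zero_eq_sum (pm p0 p1 : ℝ) (n : ℕ) :
    posBridgeSignW pm p0 p1 n 0 =
      ∑ i ∈ Finset.range (n + 1), p0 ^ i * upW pm p0 p1 (n - i) 0 := by
  simp only [posBridgeSignW_eq, lastPosW_eq_sum, sourceW_zero]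

theorem posBridgeSignW_succ_eq_sum {pm p1 : ℝ} (p0 : ℝ) (hpm : pm ≠ 0) (hp1 : p1 ≠ 0)
    (n k : ℕ) :
    posBridgeSignW pm p0 p1 n (k + 1) =
      ∑ i ∈ Finset.range (n + 1), posBridgeSignW pm p0 p1 i k * upW pm p0 p1 (n - i) 0 := by
  rw [posBridgeSignW_eq, lastPosW_eq_sum]
  simp only [sourceW_succ, negBridgeSignW_eq p0 hpm hp1]

theorem walkWeight_nonneg {pm p0 p1 : ℝ} (hpm : 0 ≤ pm) (hp0 : 0 ≤ p0) (hp1 : 0 ≤ p1) {n : ℕ}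
    (w : Fin n → Fin 3) : 0 ≤ walkWeight pm p0 p1 w :=
  Finset.prod_nonneg fun i _ => by unfold stepWeight; split_ifs <;> assumption

theorem sum_walkWeight (pm p0 p1 : ℝ) (n : ℕ) :
    ∑ w : Fin n → Fin 3, walkWeight pm p0 p1 w = (pm + p0 + p1) ^ n := by
  have h : pm + p0 + p1 = ∑ s, stepWeight pm p0 p1 s := by
    rw [Fin.sum_univ_three]; rfl
  rw [h, Fintype.sum_pow]
  rfl

theorem posBridgeSignW_nonneg {pm p0 p1 : ℝ} (hpm : 0 ≤ pm) (hp0 : 0 ≤ p0) (hp1 : 0 ≤ p1)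
    (n k : ℕ) : 0 ≤ posBridgeSignW pm p0 p1 n k :=
  Finset.sum_nonneg fun w _ => walkWeight_nonneg hpm hp0 hp1 w

theorem sum_posBridgeSignW_le {pm p0 p1 : ℝ} (hpm : 0 ≤ pm) (hp0 : 0 ≤ p0) (hp1 : 0 ≤ p1)
    (n K : ℕ) :
    ∑ k ∈ Finset.range K, posBridgeSignW pm p0 p1 n k ≤ (pm + p0 + p1) ^ n := by
  rw [← sum_walkWeight]
  simp only [posBridgeSignW, Finset.sum_filter]
  rw [Finset.sum_comm]
  refine Finset.sum_le_sum fun w _ => ?_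
  have hw := walkWeight_nonneg hpm hp0 hp1 w
  by_cases h : IsPosBridge w
  · simp only [h, true_and, Finset.sum_ite_eq]
    split_ifs <;> simp [hw]
  · simpa [h] using hw

theorem hasSum_cauchy {f g : ℕ → ℝ} {z a b : ℝ}
    (hf : HasSum (fun n => f n * z ^ n) a)
    (hg : HasSum (fun n => g n * z ^ n) b) :
    HasSum (fun n => (∑ i ∈ Finset.range (n + 1), f i * g (n - i)) * z ^ n) (a * b) := by
  have hfn : Summable fun n => ‖f n * z ^ n‖ := hf.summable.norm
  have hgn : Summable fun n => ‖g n * z ^ n‖ := hg.summable.norm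
  have h := hasSum_sum_range_mul_of_summable_norm hfn hgn
  rw [hf.tsum_eq, hg.tsum_eq] at h
  have heq : (fun n => (∑ i ∈ Finset.range (n + 1), f i * g (n - i)) * z ^ n) = fun n =>
      ∑ i ∈ Finset.range (n + 1), f i * z ^ i * (g (n - i) * z ^ (n - i)) := by
    funext n
    rw [Finset.sum_mul]
    refine Finset.sum_congr rfl fun i hi => ?_
    have hi' : i ≤ n := by simpa [Nat.lt_succ_iff] using hi
    rw [← pow_mul_pow_sub z hi']
    ring
  rwa [heq]

theorem hasSum_posBridgeSignW {pm p1 p0 : ℝ} (hpm : pm ≠ 0) (hp1 : p1 ≠ 0) {z c m : ℝ}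
    (hc : HasSum (fun n => p0 ^ n * z ^ n) c)
    (hm : HasSum (fun n => upW pm p0 p1 n 0 * z ^ n) m) (k : ℕ) :
    HasSum (fun n => posBridgeSignW pm p0 p1 n k * z ^ n) (c * m * m ^ k) := by
  induction k with
  | zero => simpa only [posBridgeSignW_zero_eq_sum, pow_zero, mul_one] using hasSum_cauchy hc hm
  | succ k ih =>
    rw [pow_succ, ← mul_assoc]
    simpa only [posBridgeSignW_succ_eq_sum p0 hpm hp1] using hasSum_cauchy ih hm

theorem upW_le_pow {pm p0 p1 : ℝ} (hpm : 0 ≤ pm) (hp0 : 0 ≤ p0) (hp1 : 0 ≤ p1) (n : ℕ) :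
    upW pm p0 p1 n 0 ≤ (pm + p0 + p1) ^ n := by
  have h := sum_posBridgeSignW_le hpm hp0 hp1 n 1
  rw [Finset.sum_range_one, posBridgeSignW_zero_eq_sum] at h
  refine le_trans ?_ h
  have h0 : ∀ i ∈ Finset.range (n + 1), 0 ≤ p0 ^ i * upW pm p0 p1 (n - i) 0 := fun i _ =>
    mul_nonneg (pow_nonneg hp0 i) (upW_nonneg hpm hp0 hp1 _ _)
  simpa using Finset.single_le_sum h0 (Finset.mem_range.2 n.succ_pos)

/-- The excursions that start with an up step have generating function less than one. -/
theorem upW_genFun_lt_one {pm p0 p1 : ℝ} (hpm : 0 < pm) (hp0 : 0 < p0) (hp1 : 0 < p1)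
    {z c m : ℝ} (hz : 0 < z) (hzP : (pm + p0 + p1) * z < 1) (hc0 : 0 < c)
    (hc : HasSum (fun n => p0 ^ n * z ^ n) c)
    (hm : HasSum (fun n => upW pm p0 p1 n 0 * z ^ n) m) : m < 1 := by
  by_contra! hm1
  have hgeom := hasSum_geometric_of_lt_one (r := (pm + p0 + p1) * z) (by positivity) hzP
  have hbound : ∀ K : ℕ, K * c ≤ (1 - (pm + p0 + p1) * z)⁻¹ := by
    intro K
    have hsum : HasSum (fun n => ∑ k ∈ Finset.range K, posBridgeSignW pm p0 p1 n k * z ^ n)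
        (∑ k ∈ Finset.range K, c * m * m ^ k) :=
      hasSum_sum fun k _ => hasSum_posBridgeSignW hpm.ne' hp1.ne' hc hm k
    have hle : ∑ k ∈ Finset.range K, c * m * m ^ k ≤ (1 - (pm + p0 + p1) * z)⁻¹ := by
      refine hasSum_le (fun n => ?_) hsum hgeom
      rw [← Finset.sum_mul, mul_pow]
      exact mul_le_mul_of_nonneg_right (sum_posBridgeSignW_le hpm.le hp0.le hp1.le n K)
        (by positivity)
    calc K * c = ∑ k ∈ Finset.range K, c := by simp
      _ ≤ ∑ k ∈ Finset.range K, c * m * m ^ k := Finset.sum_le_sum fun k _ => by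
          rw [mul_assoc, ← pow_succ']
          exact le_mul_of_one_le_right hc0.le (one_le_pow₀ hm1)
      _ ≤ _ := hle
  obtain ⟨K, hK⟩ := exists_nat_gt ((1 - (pm + p0 + p1) * z)⁻¹ / c)
  rw [div_lt_iff₀ hc0] at hK
  exact hK.not_ge (hbound K)

theorem hasSum_posBridgeSignW_prod {pm p0 p1 : ℝ} (hpm : 0 < pm) (hp0 : 0 < p0) (hp1 : 0 < p1)
    {z c m u : ℝ} (hz : 0 ≤ z) (hm0 : 0 ≤ m) (hm1 : m < 1)
    (hc : HasSum (fun n => p0 ^ n * z ^ n) c)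
    (hm : HasSum (fun n => upW pm p0 p1 n 0 * z ^ n) m) (hu0 : 0 ≤ u) (hu1 : u ≤ 1) :
    HasSum (fun p : ℕ × ℕ => posBridgeSignW pm p0 p1 p.1 p.2 * z ^ p.1 * u ^ p.2)
      (c * m / (1 - u * m)) := by
  have hrow : ∀ k, HasSum (fun n => posBridgeSignW pm p0 p1 n k * z ^ n * u ^ k)
      (c * m * (u * m) ^ k) := fun k => by
    rw [mul_pow, mul_comm (u ^ k), ← mul_assoc]
    exact (hasSum_posBridgeSignW hpm.ne' hp1.ne' hc hm k).mul_right _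
  have hgeom : HasSum (fun k => c * m * (u * m) ^ k) (c * m / (1 - u * m)) :=
    (hasSum_geometric_of_lt_one (mul_nonneg hu0 hm0)
      ((mul_le_of_le_one_left hm0 hu1).trans_lt hm1)).mul_left _
  rw [← (Equiv.prodComm ℕ ℕ).hasSum_iff]
  have hsummable : Summable
      ((fun p : ℕ × ℕ => posBridgeSignW pm p0 p1 p.1 p.2 * z ^ p.1 * u ^ p.2) ∘
        Equiv.prodComm ℕ ℕ) := by
    rw [summable_prod_of_nonneg]
    · refine ⟨fun k => (hrow k).summable, ?_⟩
      convert hgeom.summable using 2 with k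
      exact (hrow k).tsum_eq
    · intro p
      exact mul_nonneg (mul_nonneg (posBridgeSignW_nonneg hpm.le hp0.le hp1.le _ _)
        (pow_nonneg hz _)) (pow_nonneg hu0 _)
  have h := hsummable.hasSum.prod_fiberwise hrow
  exact h.unique hgeom ▸ hsummable.hasSum

end MotzkinWalk

/-- **Positive bridges**: `b⁺_{n,k} = b⁻_{n,k} = (b_{n,k} - χ_{n,k})/2` and
`B₊(z,u) = (E(z) - C(z))/(1 - uE₁(z))`. -/
theorem positive_bridges (pm p0 p1 : ℝ)
    (hpm : 0 < pm) (hp0 : 0 < p0) (hp1 : 0 < p1) :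
    let P1 : ℝ := pm + p0 + p1
    let E : ℝ → ℝ := fun z => ∑' n : ℕ, posExcW pm p0 p1 n * z ^ n
    let C : ℝ → ℝ := fun z => 1 / (1 - p0 * z)
    let E₁ : ℝ → ℝ := fun z => E z / C z - 1
    (∀ n k : ℕ,
      posBridgeSignW pm p0 p1 n k = negBridgeSignW pm p0 p1 n k ∧
      posBridgeSignW pm p0 p1 n k =
        (bridgeSignW pm p0 p1 n k - (if k = 0 then p0 ^ n else 0)) / 2) ∧
    ∀ z : ℝ, 0 < z → z < 1 / P1 → ∀ u : ℝ, 0 ≤ u → u ≤ 1 →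
      Summable (fun n : ℕ => posExcW pm p0 p1 n * z ^ n) ∧
      HasSum (fun p : ℕ × ℕ => posBridgeSignW pm p0 p1 p.1 p.2 * z ^ p.1 * u ^ p.2)
        ((E z - C z) / (1 - u * E₁ z)) := by
  intro P1 E C E₁
  refine ⟨fun n k => ?_, fun z hz hzP u hu0 hu1 => ?_⟩
  · have hneg := MotzkinWalk.negBridgeSignW_eq p0 hpm.ne' hp1.ne' n k
    have hall := MotzkinWalk.bridgeSignW_eq pm p0 p1 n k
    exact ⟨hneg.symm, by rw [hall, hneg]; ring⟩
  · have hP : 0 < pm + p0 + p1 := by positivity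
    have hzP' : (pm + p0 + p1) * z < 1 := by
      rw [mul_comm]
      exact (lt_div_iff₀ hP).1 hzP
    have hp0z : p0 * z < 1 := by nlinarith
    have hC0 : 0 < C z := one_div_pos.2 (by linarith)
    have hC : HasSum (fun n => p0 ^ n * z ^ n) (C z) := by
      simpa [C, mul_pow] using hasSum_geometric_of_lt_one (mul_pos hp0 hz).le hp0z
    have hnn : ∀ n, 0 ≤ MotzkinWalk.upW pm p0 p1 n 0 * z ^ n := fun n =>
      mul_nonneg (MotzkinWalk.upW_nonneg hpm.le hp0.le hp1.le n 0) (pow_nonneg hz.le n)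
    have hsummable : Summable fun n => MotzkinWalk.upW pm p0 p1 n 0 * z ^ n := by
      refine Summable.of_nonneg_of_le hnn (fun n => ?_)
        (summable_geometric_of_lt_one (mul_pos hP hz).le hzP')
      rw [mul_pow]
      exact mul_le_mul_of_nonneg_right (MotzkinWalk.upW_le_pow hpm.le hp0.le hp1.le n)
        (pow_nonneg hz.le n)
    obtain ⟨m, hm⟩ := hsummable
    have hE : HasSum (fun n => posExcW pm p0 p1 n * z ^ n) (C z * m + C z) := by
      simpa only [MotzkinWalk.posExcW_eq, add_mul, pow_zero, mul_one] using
        (MotzkinWalk.hasSum_posBridgeSignW hpm.ne' hp1.ne' hC hm 0).add hC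
    have hEz : E z = C z * m + C z := hE.tsum_eq
    have hE₁ : E₁ z = m := by
      simp only [E₁, hEz]
      field_simp
      ring
    refine ⟨hE.summable, ?_⟩
    rw [hE₁, hEz, add_sub_cancel_right]
    exact MotzkinWalk.hasSum_posBridgeSignW_prod hpm hp0 hp1 hz.le (hm.nonneg hnn)
      (MotzkinWalk.upW_genFun_lt_one hpm hp0 hp1 hz hzP' hC0 hC hm) hC hm hu0 hu1
end

section
/- Fix positive reals p₋₁, p₀, p₁ with p₁ ≠ p₋₁, let P(1) = p₋₁ + p₀ + p₁, and let w_{n,k} denote the total weight of Motzkin walks of length n with exactly k sign changes. Define X_n by P[X_n = k] = w_{n,k}/P(1)ⁿ. Then X_n converges in distribution to a geometric law: for every fixed k ∈ ℕ, lim_{n→∞} w_{n,k}/P(1)ⁿ = λ^k · (1 − λ), where λ = p₁/p₋₁ if p₁ < p₋₁ (negative drift) and λ = p₋₁/p₁ if p₁ > p₋₁ (positive drift). -/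
open scoped BigOperators Classical

open Filter Topology

namespace MotzkinSign

/-! ### Sign changes of an integer sequence -/

/-- The sign of the last nonzero term among `ω 0, …, ω n` (`0` if there is none). -/
def lastSign (ω : ℕ → ℤ) : ℕ → ℤ
  | 0 => (ω 0).sign
  | n + 1 => if ω (n + 1) = 0 then lastSign ω n else (ω (n + 1)).sign

/-- The number of sign changes of `ω 0, …, ω n`. -/
def seqSignChanges (ω : ℕ → ℤ) (n : ℕ) : ℕ :=
  (((Finset.range (n+1)) ×ˢ (Finset.range (n+1))).filter
    (fun p => p.1 < p.2 ∧ ω p.1 * ω p.2 < 0 ∧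
      ∀ l ∈ Finset.Ioo p.1 p.2, ω l = 0)).card

theorem lastSign_congr {ω ω' : ℕ → ℤ} {n : ℕ} (h : ∀ j ≤ n, ω j = ω' j) :
    lastSign ω n = lastSign ω' n := by
  induction n with
  | zero => simp [lastSign, h 0 le_rfl]
  | succ n ih =>
    simp only [lastSign, h (n + 1) le_rfl, ih fun j hj => h j (by omega)]

theorem seqSignChanges_congr {ω ω' : ℕ → ℤ} {n : ℕ} (h : ∀ j ≤ n, ω j = ω' j) :
    seqSignChanges ω n = seqSignChanges ω' n := by
  unfold seqSignChanges
  congr 1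
  apply Finset.filter_congr
  rintro ⟨i, j⟩ hp
  simp only [Finset.mem_product, Finset.mem_range] at hp
  simp only [h i (by omega), h j (by omega)]
  refine and_congr_right fun _ => and_congr_right fun _ => forall₂_congr fun l hl => ?_
  rw [Finset.mem_Ioo] at hl
  rw [h l (by omega)]

theorem sign_mul_neg_iff (x z : ℤ) : x.sign * z < 0 ↔ x * z < 0 := by
  rcases lt_trichotomy x 0 with h | h | h
  · rw [Int.sign_eq_neg_one_of_neg h]
    constructor <;> intro h' <;> nlinarith
  · simp [h]
  · rw [Int.sign_eq_one_of_pos h]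
    constructor <;> intro h' <;> nlinarith

theorem card_change_partners (ω : ℕ → ℤ) (n : ℕ) (z : ℤ) :
    ((Finset.range (n + 1)).filter
      (fun i => ω i * z < 0 ∧ ∀ l ∈ Finset.Ioo i (n + 1), ω l = 0)).card
      = if lastSign ω n * z < 0 then 1 else 0 := by
  induction n with
  | zero =>
    simp only [lastSign, sign_mul_neg_iff]
    split_ifs with h
    · rw [Finset.card_eq_one]
      refine ⟨0, ?_⟩
      ext i
      simp only [Finset.mem_filter, Finset.mem_range, Finset.mem_Ioo, Finset.mem_singleton]
      constructor
      · rintro ⟨hi, -⟩; omega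
      · rintro rfl
        exact ⟨by omega, h, fun l hl => by omega⟩
    · rw [Finset.card_eq_zero, Finset.eq_empty_iff_forall_notMem]
      intro i hmem
      simp only [Finset.mem_filter] at hmem
      obtain ⟨hi, h1, -⟩ := hmem
      obtain rfl : i = 0 := by simpa using hi
      exact h h1
  | succ n ih =>
    by_cases h0 : ω (n + 1) = 0
    · rw [show lastSign ω (n + 1) = lastSign ω n from if_pos h0, ← ih]
      congr 1
      ext i
      simp only [Finset.mem_filter, Finset.mem_range, Finset.mem_Ioo]
      constructor
      · rintro ⟨hi, h1, h2⟩
        have : i ≠ n + 1 := by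
          rintro rfl
          simp [h0] at h1
        exact ⟨by omega, h1, fun l hl => h2 l (by omega)⟩
      · rintro ⟨hi, h1, h2⟩
        refine ⟨by omega, h1, fun l hl => ?_⟩
        rcases eq_or_ne l (n + 1) with rfl | hne
        · exact h0
        · exact h2 l (by omega)
    · rw [show lastSign ω (n + 1) = (ω (n + 1)).sign from if_neg h0]
      simp only [sign_mul_neg_iff]
      split_ifs with h
      · rw [Finset.card_eq_one]
        refine ⟨n + 1, ?_⟩
        ext i
        simp only [Finset.mem_filter, Finset.mem_range, Finset.mem_Ioo, Finset.mem_singleton]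
        constructor
        · rintro ⟨hi, -, h2⟩
          by_contra hne
          exact h0 (h2 (n + 1) (by omega))
        · rintro rfl
          exact ⟨by omega, h, fun l hl => by omega⟩
      · rw [Finset.card_eq_zero, Finset.eq_empty_iff_forall_notMem]
        intro i hmem
        simp only [Finset.mem_filter] at hmem
        obtain ⟨hi, h1, h2⟩ := hmem
        rw [Finset.mem_range] at hi
        rcases eq_or_ne i (n + 1) with rfl | hne
        · exact h h1
        · exact h0 (h2 (n + 1) (by rw [Finset.mem_Ioo]; omega))

theorem seqSignChanges_succ (ω : ℕ → ℤ) (n : ℕ) :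
    seqSignChanges ω (n + 1) =
      seqSignChanges ω n + if lastSign ω n * ω (n + 1) < 0 then 1 else 0 := by
  rw [← card_change_partners]
  unfold seqSignChanges
  refine Eq.trans ?_ (congrArg (_ + ·) (Finset.card_map
    (Function.Embedding.sectL ℕ (n + 1))))
  beta_reduce
  rw [← Finset.card_union_of_disjoint]
  · congr 1
    ext ⟨i, j⟩
    simp only [Finset.mem_filter, Finset.mem_product, Finset.mem_range, Finset.mem_union,
      Finset.mem_map, Function.Embedding.sectL_apply, Prod.mk.injEq]
    constructor
    · rintro ⟨⟨hi, hj⟩, hij, h⟩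
      rcases eq_or_ne j (n + 1) with rfl | hne
      · exact Or.inr ⟨i, ⟨hij, h⟩, rfl, rfl⟩
      · exact Or.inl ⟨⟨by omega, by omega⟩, hij, h⟩
    · rintro (⟨⟨hi, hj⟩, hij, h⟩ | ⟨i', ⟨hi, h⟩, rfl, rfl⟩)
      · exact ⟨⟨by omega, by omega⟩, hij, h⟩
      · exact ⟨⟨by omega, by omega⟩, hi, h⟩
  · rw [Finset.disjoint_left]
    rintro ⟨i, j⟩ h1 h2
    simp only [Finset.mem_filter, Finset.mem_product, Finset.mem_range,
      Finset.mem_map, Function.Embedding.sectL_apply, Prod.mk.injEq] at h1 h2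
    obtain ⟨i', -, -, rfl⟩ := h2
    omega

theorem seqSignChanges_zero (ω : ℕ → ℤ) : seqSignChanges ω 0 = 0 := by
  unfold seqSignChanges
  rw [Finset.card_eq_zero, Finset.filter_eq_empty_iff]
  rintro ⟨i, j⟩ hp ⟨h, -⟩
  simp only [Finset.mem_product, Finset.mem_range] at hp h
  omega

/-! ### Walks extended by one step -/

theorem psum_zero {n : ℕ} (w : Fin n → Fin 3) : psum w 0 = 0 := by
  simp [psum]

theorem psum_snoc_of_le {n : ℕ} (w : Fin n → Fin 3) (d : Fin 3) {j : ℕ} (hj : j ≤ n) :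
    psum (Fin.snoc w d : Fin (n + 1) → Fin 3) j = psum w j := by
  unfold psum
  rw [Finset.sum_filter, Finset.sum_filter, Fin.sum_univ_castSucc]
  simp [hj]

theorem psum_snoc_last {n : ℕ} (w : Fin n → Fin 3) (d : Fin 3) :
    psum (Fin.snoc w d : Fin (n + 1) → Fin 3) (n + 1) = psum w n + stepVal d := by
  unfold psum
  rw [Finset.sum_filter, Finset.sum_filter, Fin.sum_univ_castSucc]
  simp [Fin.is_lt, (Fin.is_lt _).trans (Nat.lt_succ_self n)]

theorem walkWeight_snoc (b z a : ℝ) {n : ℕ} (w : Fin n → Fin 3) (d : Fin 3) :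
    walkWeight b z a (Fin.snoc w d : Fin (n + 1) → Fin 3)
      = walkWeight b z a w * stepWeight b z a d := by
  simp [walkWeight, Fin.prod_univ_castSucc]

/-- The sign of the last nonzero position after a move to `x`, given the previous one. -/
def nextSign (s x : ℤ) : ℤ := if x = 0 then s else x.sign

/-- The number of sign changes still to be seen, out of `k`, after a move to `x`. -/
def nextCount (k : ℕ) (s x : ℤ) : ℕ := k - if s * x < 0 then 1 else 0

theorem lastSign_snoc {n : ℕ} (w : Fin n → Fin 3) (d : Fin 3) :
    lastSign (psum (Fin.snoc w d : Fin (n + 1) → Fin 3)) (n + 1)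
      = nextSign (lastSign (psum w) n) (psum w n + stepVal d) := by
  rw [lastSign, psum_snoc_last, nextSign,
    lastSign_congr fun j hj => psum_snoc_of_le w d hj]

theorem signChanges_snoc {n : ℕ} (w : Fin n → Fin 3) (d : Fin 3) :
    signChanges (Fin.snoc w d : Fin (n + 1) → Fin 3)
      = signChanges w
        + if lastSign (psum w) n * (psum w n + stepVal d) < 0 then 1 else 0 := by
  have h := seqSignChanges_succ (psum (Fin.snoc w d : Fin (n + 1) → Fin 3)) n
  rw [psum_snoc_last, lastSign_congr fun j hj => psum_snoc_of_le w d hj,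
    seqSignChanges_congr fun j hj => psum_snoc_of_le w d hj] at h
  exact h

/-! ### Tail weights of the number of sign changes -/

/-- Total weight of the `n`-step walks started at `x`, with `s` the sign of the last nonzero
position so far, that have at least `k` sign changes. -/
def tailW (b z a : ℝ) : ℕ → ℕ → ℤ → ℤ → ℝ
  | 0, k, _, _ => if k = 0 then 1 else 0
  | n + 1, k, s, x =>
      b * tailW b z a n (nextCount k s (x - 1)) (nextSign s (x - 1)) (x - 1)
      + z * tailW b z a n (nextCount k s x) (nextSign s x) x
      + a * tailW b z a n (nextCount k s (x + 1)) (nextSign s (x + 1)) (x + 1)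

theorem sum_walkWeight_mul_tailW (b z a : ℝ) (k n m : ℕ) :
    ∑ w : Fin n → Fin 3, walkWeight b z a w *
      tailW b z a m (k - signChanges w) (lastSign (psum w) n) (psum w n)
      = tailW b z a (n + m) k 0 0 := by
  induction n generalizing m with
  | zero =>
    have h (w : Fin 0 → Fin 3) : signChanges w = 0 := seqSignChanges_zero _
    simp [walkWeight, h, lastSign, psum_zero]
  | succ n ih =>
    rw [show n + 1 + m = n + (m + 1) by ring, ← ih,
      ← (Fin.snocEquiv fun _ : Fin (n + 1) => Fin 3).sum_comp, Fintype.sum_prod_type,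
      Finset.sum_comm]
    refine Finset.sum_congr rfl fun w _ => ?_
    have h (d : Fin 3) : walkWeight b z a (Fin.snoc w d : Fin (n + 1) → Fin 3) *
        tailW b z a m (k - signChanges (Fin.snoc w d : Fin (n + 1) → Fin 3))
          (lastSign (psum (Fin.snoc w d : Fin (n + 1) → Fin 3)) (n + 1))
          (psum (Fin.snoc w d : Fin (n + 1) → Fin 3) (n + 1))
        = walkWeight b z a w * (stepWeight b z a d *
          tailW b z a m (nextCount (k - signChanges w) (lastSign (psum w) n)
            (psum w n + stepVal d)) (nextSign (lastSign (psum w) n) (psum w n + stepVal d))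
            (psum w n + stepVal d)) := by
      rw [walkWeight_snoc, signChanges_snoc, lastSign_snoc, psum_snoc_last, nextCount,
        Nat.sub_sub, mul_assoc]
    refine (Finset.sum_congr rfl fun d _ => h d).trans ?_
    rw [← Finset.mul_sum, Fin.sum_univ_three, tailW]
    simp [stepWeight, stepVal, ← sub_eq_add_neg]

theorem walkSignW_eq (b z a : ℝ) (n k : ℕ) :
    walkSignW b z a n k = tailW b z a n k 0 0 - tailW b z a n (k + 1) 0 0 := by
  have h (k : ℕ) := sum_walkWeight_mul_tailW b z a k n 0
  simp only [add_zero, tailW] at h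
  rw [← h, ← h, ← Finset.sum_sub_distrib, walkSignW, Finset.sum_filter]
  refine Finset.sum_congr rfl fun w _ => ?_
  rw [← mul_sub]
  rcases lt_trichotomy (signChanges w) k with hlt | heq | hgt
  · rw [if_neg (by omega), if_neg (by omega), if_neg (by omega)]; ring
  · rw [if_pos heq, if_pos (by omega), if_neg (by omega)]; ring
  · rw [if_neg (by omega), if_pos (by omega), if_pos (by omega)]; ring

theorem walkSignW_div (b z a c : ℝ) (n k : ℕ) :
    walkSignW (b / c) (z / c) (a / c) n k = walkSignW b z a n k / c ^ n := by
  have h (d : Fin 3) :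
      stepWeight (b / c) (z / c) (a / c) d = stepWeight b z a d / c := by
    unfold stepWeight
    split_ifs <;> rfl
  unfold walkSignW
  rw [Finset.sum_div]
  refine Finset.sum_congr rfl fun w _ => ?_
  simp [walkWeight, h, Finset.prod_div_distrib]

theorem nextSign_neg (s x : ℤ) : nextSign (-s) (-x) = -nextSign s x := by
  unfold nextSign
  split_ifs <;> simp_all

theorem nextCount_neg (k : ℕ) (s x : ℤ) : nextCount k (-s) (-x) = nextCount k s x := by
  simp [nextCount]

theorem tailW_neg (b z a : ℝ) (n k : ℕ) (s x : ℤ) :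
    tailW a z b n k (-s) (-x) = tailW b z a n k s x := by
  induction n generalizing k s x with
  | zero => rfl
  | succ n ih =>
    simp only [tailW]
    rw [show -x - 1 = -(x + 1) by ring, show -x + 1 = -(x - 1) by ring]
    simp only [nextSign_neg, nextCount_neg, ih]
    ring

theorem tailW_count_zero {b z a : ℝ} (h1 : b + z + a = 1) (n : ℕ) (s x : ℤ) :
    tailW b z a n 0 s x = 1 := by
  induction n generalizing s x with
  | zero => rfl
  | succ n ih => simp only [tailW, nextCount, Nat.zero_sub, ih]; linarith

theorem tailW_nonneg {b z a : ℝ} (hb : 0 ≤ b) (hz : 0 ≤ z) (ha : 0 ≤ a) (n k : ℕ) (s x : ℤ) :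
    0 ≤ tailW b z a n k s x := by
  induction n generalizing k s x with
  | zero => simp only [tailW]; split_ifs <;> norm_num
  | succ n ih =>
    simp only [tailW]
    have := mul_nonneg hb (ih (nextCount k s (x - 1)) (nextSign s (x - 1)) (x - 1))
    have := mul_nonneg hz (ih (nextCount k s x) (nextSign s x) x)
    have := mul_nonneg ha (ih (nextCount k s (x + 1)) (nextSign s (x + 1)) (x + 1))
    linarith

theorem tailW_le_one {b z a : ℝ} (hb : 0 ≤ b) (hz : 0 ≤ z) (ha : 0 ≤ a) (h1 : b + z + a = 1)
    (n k : ℕ) (s x : ℤ) : tailW b z a n k s x ≤ 1 := by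
  induction n generalizing k s x with
  | zero => simp only [tailW]; split_ifs <;> norm_num
  | succ n ih =>
    simp only [tailW]
    have := mul_le_of_le_one_right hb (ih (nextCount k s (x - 1)) (nextSign s (x - 1)) (x - 1))
    have := mul_le_of_le_one_right hz (ih (nextCount k s x) (nextSign s x) x)
    have := mul_le_of_le_one_right ha (ih (nextCount k s (x + 1)) (nextSign s (x + 1)) (x + 1))
    linarith

theorem tailW_monotone {b z a : ℝ} (hb : 0 ≤ b) (hz : 0 ≤ z) (ha : 0 ≤ a) (h1 : b + z + a = 1)
    (k : ℕ) (s x : ℤ) : Monotone fun n => tailW b z a n k s x := by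
  refine monotone_nat_of_le_succ fun n => ?_
  induction n generalizing k s x with
  | zero =>
    rcases Nat.eq_zero_or_pos k with rfl | hk
    · simp only [tailW_count_zero h1, le_refl]
    · rw [tailW, if_neg hk.ne']
      exact tailW_nonneg hb hz ha _ _ _ _
  | succ n ih =>
    rw [tailW, tailW]
    gcongr <;> apply ih

/-- The limit of `tailW` as the length of the walk tends to infinity. -/
noncomputable def tailLim (b z a : ℝ) (k : ℕ) (s x : ℤ) : ℝ := ⨆ n, tailW b z a n k s x

section Limit

variable {b z a : ℝ}

theorem tendsto_tailW (hb : 0 ≤ b) (hz : 0 ≤ z) (ha : 0 ≤ a) (h1 : b + z + a = 1)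
    (k : ℕ) (s x : ℤ) :
    Tendsto (fun n => tailW b z a n k s x) atTop (𝓝 (tailLim b z a k s x)) :=
  tendsto_atTop_ciSup (tailW_monotone hb hz ha h1 k s x)
    ⟨1, by rintro _ ⟨n, rfl⟩; exact tailW_le_one hb hz ha h1 n k s x⟩

theorem tailLim_eq (hb : 0 ≤ b) (hz : 0 ≤ z) (ha : 0 ≤ a) (h1 : b + z + a = 1)
    (k : ℕ) (s x : ℤ) :
    tailLim b z a k s x
      = b * tailLim b z a (nextCount k s (x - 1)) (nextSign s (x - 1)) (x - 1)
      + z * tailLim b z a (nextCount k s x) (nextSign s x) x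
      + a * tailLim b z a (nextCount k s (x + 1)) (nextSign s (x + 1)) (x + 1) := by
  have h := tendsto_tailW hb hz ha h1
  exact tendsto_nhds_unique ((h k s x).comp (tendsto_add_atTop_nat 1))
    ((((h _ _ _).const_mul b).add ((h _ _ _).const_mul z)).add ((h _ _ _).const_mul a))

theorem tailLim_count_zero (h1 : b + z + a = 1) (s x : ℤ) : tailLim b z a 0 s x = 1 := by
  simp [tailLim, tailW_count_zero h1]

theorem tailLim_mem_Icc (hb : 0 ≤ b) (hz : 0 ≤ z) (ha : 0 ≤ a) (h1 : b + z + a = 1)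
    (k : ℕ) (s x : ℤ) : tailLim b z a k s x ∈ Set.Icc (0 : ℝ) 1 :=
  ⟨ge_of_tendsto' (tendsto_tailW hb hz ha h1 k s x) fun n => tailW_nonneg hb hz ha n k s x,
    le_of_tendsto' (tendsto_tailW hb hz ha h1 k s x) fun n => tailW_le_one hb hz ha h1 n k s x⟩

theorem nextSign_of_pos (s : ℤ) {x : ℤ} (hx : 0 < x) : nextSign s x = 1 := by
  rw [nextSign, if_neg hx.ne', Int.sign_eq_one_of_pos hx]

theorem nextSign_of_neg (s : ℤ) {x : ℤ} (hx : x < 0) : nextSign s x = -1 := by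
  rw [nextSign, if_neg hx.ne, Int.sign_eq_neg_one_of_neg hx]

theorem nextSign_one {x : ℤ} (hx : 0 ≤ x) : nextSign 1 x = 1 := by
  rcases hx.eq_or_lt with rfl | h
  · simp [nextSign]
  · exact nextSign_of_pos 1 h

theorem nextSign_neg_one {x : ℤ} (hx : x ≤ 0) : nextSign (-1) x = -1 := by
  rcases hx.eq_or_lt with rfl | h
  · simp [nextSign]
  · exact nextSign_of_neg (-1) h

theorem nextCount_of_nonneg (k : ℕ) {s x : ℤ} (h : 0 ≤ s * x) : nextCount k s x = k := by
  rw [nextCount, if_neg h.not_gt, Nat.sub_zero]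

theorem nextCount_of_neg (k : ℕ) {s x : ℤ} (h : s * x < 0) : nextCount (k + 1) s x = k := by
  rw [nextCount, if_pos h, Nat.add_sub_cancel]

/-- With negative drift, the probability of ever changing sign from the negative side is at most
the corresponding ruin probability. -/
theorem tailW_neg_side_le (hb : 0 < b) (hz : 0 ≤ z) (ha : 0 ≤ a) (h1 : b + z + a = 1)
    (n k y : ℕ) : tailW b z a n (k + 1) (-1) (-(y : ℤ)) ≤ (a / b) ^ (y + 1) := by
  have hc : 0 ≤ a / b := by positivity
  have hbc : b * (a / b) = a := by field_simp
  induction n generalizing y with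
  | zero => simp only [tailW]; simp; positivity
  | succ n ih =>
    have hdown : tailW b z a n (k + 1) (-1) (-(y : ℤ) - 1) ≤ (a / b) ^ (y + 2) := by
      have := ih (y + 1)
      rwa [show (-((y + 1 : ℕ) : ℤ)) = -(y : ℤ) - 1 by push_cast; ring] at this
    have hup : tailW b z a n (nextCount (k + 1) (-1) (-(y : ℤ) + 1))
        (nextSign (-1) (-(y : ℤ) + 1)) (-(y : ℤ) + 1) ≤ (a / b) ^ y := by
      cases y with
      | zero => simpa using tailW_le_one hb.le hz ha h1 _ _ _ _
      | succ y =>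
        have := ih y
        rw [show -((y + 1 : ℕ) : ℤ) + 1 = -(y : ℤ) by push_cast; ring,
          nextSign_neg_one (by omega), nextCount_of_nonneg _ (by omega)]
        exact this
    rw [tailW, nextSign_neg_one (x := -(y : ℤ) - 1) (by omega),
      nextCount_of_nonneg (x := -(y : ℤ) - 1) _ (by omega),
      nextSign_neg_one (x := -(y : ℤ)) (by omega),
      nextCount_of_nonneg (x := -(y : ℤ)) _ (by omega)]
    calc _ ≤ b * (a / b) ^ (y + 2) + z * (a / b) ^ (y + 1) + a * (a / b) ^ y := by
          gcongr
          exact ih y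
      _ = (a / b) ^ y * ((a / b) * (b * (a / b)) + z * (a / b) + a) := by ring
      _ = (a / b) ^ y * ((a / b) * (b * (a / b)) + z * (a / b) + b * (a / b)) := by
          conv_lhs => rw [← hbc]
          simp only [hbc]
      _ = (a / b) ^ (y + 1) * (b * (a / b) + z + b) := by ring
      _ = (a / b) ^ (y + 1) := by
          rw [hbc, show a + z + b = 1 by linarith, mul_one]

/-- A function that vanishes at `0` and is harmonic for a walk with step weights `p` (up) and
`q` (down) is a geometric sum. -/
theorem harmonic_eq_geom_sum {p q : ℝ} (hp : 0 < p) {E : ℕ → ℝ} (h0 : E 0 = 0)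
    (hE : ∀ y, (p + q) * E (y + 1) = p * E (y + 2) + q * E y) (y : ℕ) :
    E y = E 1 * ∑ i ∈ Finset.range y, (q / p) ^ i := by
  have hd : ∀ y, E (y + 1) - E y = E 1 * (q / p) ^ y := by
    intro y
    induction y with
    | zero => simp [h0]
    | succ y ih =>
      have : E (y + 2) - E (y + 1) = (q / p) * (E (y + 1) - E y) := by
        field_simp
        linarith [hE y]
      rw [this, ih]
      ring
  rw [Finset.mul_sum, ← Finset.sum_congr rfl fun i _ => hd i, Finset.sum_range_sub, h0, sub_zero]

theorem harmonic_eq_zero_of_bounded {p q C : ℝ} (hp : 0 < p) (hpq : p ≤ q) {E : ℕ → ℝ}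
    (h0 : E 0 = 0) (hE : ∀ y, (p + q) * E (y + 1) = p * E (y + 2) + q * E y)
    (hC : ∀ y, |E y| ≤ C) (y : ℕ) : E y = 0 := by
  have hform := harmonic_eq_geom_sum hp h0 hE
  suffices h : E 1 = 0 by rw [hform, h, zero_mul]
  by_contra hne
  have hpos : 0 < |E 1| := abs_pos.mpr hne
  obtain ⟨N, hN⟩ := exists_nat_gt (C / |E 1|)
  have hsum : (N : ℝ) ≤ ∑ i ∈ Finset.range N, (q / p) ^ i := by
    calc (N : ℝ) = ∑ i ∈ Finset.range N, (1 : ℝ) := by simp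
      _ ≤ _ := Finset.sum_le_sum fun i _ => one_le_pow₀ ((one_le_div hp).mpr hpq)
  have h := hC N
  rw [hform, abs_mul] at h
  rw [div_lt_iff₀ hpos] at hN
  nlinarith [mul_le_mul_of_nonneg_left (hsum.trans (le_abs_self _)) hpos.le]

theorem harmonic_eq_zero_of_tendsto_zero {p q : ℝ} (hp : 0 < p) (hq : 0 ≤ q) {E : ℕ → ℝ}
    (h0 : E 0 = 0) (hE : ∀ y, (p + q) * E (y + 1) = p * E (y + 2) + q * E y)
    (hlim : Tendsto E atTop (𝓝 0)) (y : ℕ) : E y = 0 := by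
  have hform := harmonic_eq_geom_sum hp h0 hE
  suffices h : E 1 = 0 by rw [hform, h, zero_mul]
  have hge : ∀ y, |E 1| ≤ |E (y + 1)| := by
    intro y
    rw [hform (y + 1), abs_mul]
    refine le_mul_of_one_le_right (abs_nonneg _) (le_trans ?_ (le_abs_self _))
    rw [Finset.sum_range_succ', pow_zero]
    have : 0 ≤ ∑ i ∈ Finset.range y, (q / p) ^ (i + 1) :=
      Finset.sum_nonneg fun i _ => by positivity
    linarith
  have := ge_of_tendsto' ((hlim.comp (tendsto_add_atTop_nat 1)).abs) hge
  rw [abs_zero] at this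
  exact abs_eq_zero.mp (le_antisymm this (abs_nonneg _))

/-- With negative drift, a walk on the positive side almost surely changes sign. -/
theorem tailLim_pos_side (hz : 0 ≤ z) (ha : 0 < a) (hab : a < b)
    (h1 : b + z + a = 1) (k y : ℕ) :
    tailLim b z a (k + 1) 1 y = tailLim b z a k (-1) (-1) := by
  have hb : 0 < b := ha.trans hab
  set v := tailLim b z a k (-1) (-1) with hv
  let E : ℕ → ℝ := fun y => Nat.casesOn y 0 fun y => tailLim b z a (k + 1) 1 y - v
  have hEs : ∀ y : ℕ, E (y + 1) = tailLim b z a (k + 1) 1 y - v := fun _ => rfl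
  suffices h : E (y + 1) = 0 by rw [hEs] at h; linarith
  refine harmonic_eq_zero_of_bounded (C := 1) ha hab.le rfl (fun y => ?_) (fun y => ?_) _
  · have hrec := tailLim_eq hb.le hz ha.le h1 (k + 1) 1 y
    rw [nextSign_one (x := (y : ℤ)) (by omega), nextSign_one (x := (y : ℤ) + 1) (by omega),
      nextCount_of_nonneg (x := (y : ℤ)) _ (by omega),
      nextCount_of_nonneg (x := (y : ℤ) + 1) _ (by omega)] at hrec
    have hdown : tailLim b z a (nextCount (k + 1) 1 ((y : ℤ) - 1))
        (nextSign 1 ((y : ℤ) - 1)) ((y : ℤ) - 1) = E y + v := by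
      cases y with
      | zero =>
        rw [nextCount_of_neg _ (by norm_num), nextSign_of_neg _ (by norm_num)]
        simp [E, hv]
      | succ y =>
        rw [hEs, nextCount_of_nonneg _ (by push_cast; omega), nextSign_one (by push_cast; omega)]
        push_cast
        ring_nf
    rw [hdown] at hrec
    rw [hEs, hEs]
    push_cast
    have hz' : z = 1 - a - b := by linarith
    rw [hz'] at hrec ⊢
    linear_combination hrec
  · cases y with
    | zero => simp [E]
    | succ y =>
      rw [hEs, abs_le]
      have h2 := tailLim_mem_Icc hb.le hz ha.le h1 (k + 1) 1 y
      have h3 := tailLim_mem_Icc hb.le hz ha.le h1 k (-1) (-1)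
      rw [← hv] at h3
      constructor <;> linarith [h2.1, h2.2, h3.1, h3.2]

/-- With negative drift, a walk on the negative side changes sign with the ruin
probability. -/
theorem tailLim_neg_side (hz : 0 ≤ z) (ha : 0 < a) (hab : a < b)
    (h1 : b + z + a = 1) (k y : ℕ) :
    tailLim b z a (k + 1) (-1) (-(y : ℤ)) = tailLim b z a k 1 1 * (a / b) ^ (y + 1) := by
  have hb : 0 < b := ha.trans hab
  have hc : 0 ≤ a / b := by positivity
  have hbc : b * (a / b) = a := by field_simp
  set v := tailLim b z a k 1 1 with hv
  let E : ℕ → ℝ := fun y => Nat.casesOn y 0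
    fun y => tailLim b z a (k + 1) (-1) (-(y : ℤ)) - v * (a / b) ^ (y + 1)
  have hEs : ∀ y : ℕ, E (y + 1)
    = tailLim b z a (k + 1) (-1) (-(y : ℤ)) - v * (a / b) ^ (y + 1) := fun _ => rfl
  suffices h : E (y + 1) = 0 by rw [hEs] at h; linarith
  refine harmonic_eq_zero_of_tendsto_zero hb ha.le rfl (fun y => ?_) ?_ _
  · have hrec := tailLim_eq hb.le hz ha.le h1 (k + 1) (-1) (-(y : ℤ))
    rw [nextSign_neg_one (x := -(y : ℤ)) (by omega),
      nextSign_neg_one (x := -(y : ℤ) - 1) (by omega),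
      nextCount_of_nonneg (x := -(y : ℤ)) _ (by omega),
      nextCount_of_nonneg (x := -(y : ℤ) - 1) _ (by omega)] at hrec
    have hup : tailLim b z a (nextCount (k + 1) (-1) (-(y : ℤ) + 1))
        (nextSign (-1) (-(y : ℤ) + 1)) (-(y : ℤ) + 1) = E y + v * (a / b) ^ y := by
      cases y with
      | zero =>
        rw [nextCount_of_neg _ (by norm_num), nextSign_of_pos _ (by norm_num)]
        simp [E, hv]
      | succ y =>
        rw [hEs, nextCount_of_nonneg _ (by push_cast; omega),
          nextSign_neg_one (by push_cast; omega)]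
        push_cast
        ring_nf
    rw [hup] at hrec
    rw [hEs, hEs, show (-((y + 1 : ℕ) : ℤ)) = -(y : ℤ) - 1 by push_cast; ring]
    have hz' : z = 1 - a - b := by linarith
    rw [hz'] at hrec ⊢
    have hpow : b * (a / b) ^ (y + 2) + a * (a / b) ^ y = (a + b) * (a / b) ^ (y + 1) := by
      linear_combination ((a / b) ^ (y + 1) - (a / b) ^ y) * hbc
    linear_combination hrec + v * hpow
  · rw [← tendsto_add_atTop_iff_nat 1]
    have hpow : Tendsto (fun y : ℕ => (a / b) ^ (y + 1)) atTop (𝓝 0) :=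
      (tendsto_pow_atTop_nhds_zero_of_lt_one hc ((div_lt_one hb).mpr hab)).comp
        (tendsto_add_atTop_nat 1)
    have hfirst : Tendsto (fun y : ℕ => tailLim b z a (k + 1) (-1) (-(y : ℤ))) atTop (𝓝 0) :=
      squeeze_zero (fun y => (tailLim_mem_Icc hb.le hz ha.le h1 _ _ _).1)
        (fun y => le_of_tendsto' (tendsto_tailW hb.le hz ha.le h1 _ _ _)
          fun n => tailW_neg_side_le hb hz ha.le h1 n k y) hpow
    simpa [hEs] using hfirst.sub (hpow.const_mul v)

theorem tailLim_origin (hz : 0 ≤ z) (ha : 0 < a) (hab : a < b) (h1 : b + z + a = 1) (k : ℕ) :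
    tailLim b z a k 0 0 = (a / b) ^ k := by
  have hb : 0 < b := ha.trans hab
  have hbc : b * (a / b) = a := by field_simp
  have hsides : ∀ k, a * tailLim b z a k 1 1 + b * tailLim b z a k (-1) (-1)
      = (a + b) * (a / b) ^ k := by
    intro k
    induction k with
    | zero => simp [tailLim_count_zero h1]
    | succ k ih =>
      have hpos := tailLim_pos_side hz ha hab h1 k 1
      have hneg := tailLim_neg_side hz ha hab h1 k 1
      push_cast at hpos hneg
      rw [hpos, hneg]
      linear_combination (a / b) * ih
        + (a / b * tailLim b z a k 1 1 - tailLim b z a k (-1) (-1)) * hbc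
  have hrec := tailLim_eq hb.le hz ha.le h1 k 0 0
  rw [zero_sub, zero_add, nextCount_of_nonneg k (show (0 : ℤ) ≤ 0 * -1 by norm_num),
    nextCount_of_nonneg k (show (0 : ℤ) ≤ 0 * 0 by norm_num),
    nextCount_of_nonneg k (show (0 : ℤ) ≤ 0 * 1 by norm_num),
    nextSign_of_neg 0 (show (-1 : ℤ) < 0 by norm_num),
    nextSign_of_pos 0 (show (0 : ℤ) < 1 by norm_num),
    show nextSign 0 0 = 0 from rfl] at hrec
  have hz' : z = 1 - a - b := by linarith
  have h : (a + b) * tailLim b z a k 0 0 = (a + b) * (a / b) ^ k := by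
    rw [← hsides k]
    rw [hz'] at hrec ⊢
    linear_combination hrec
  exact mul_left_cancel₀ (by positivity) h

theorem tendsto_walkSignW_of_neg_drift (hz : 0 ≤ z) (ha : 0 < a) (hab : a < b)
    (h1 : b + z + a = 1) (k : ℕ) :
    Tendsto (fun n => walkSignW b z a n k) atTop (𝓝 ((a / b) ^ k * (1 - a / b))) := by
  have h (k : ℕ) := tendsto_tailW (ha.trans hab).le hz ha.le h1 k 0 0
  simp only [tailLim_origin hz ha hab h1] at h
  have h2 := (h k).sub (h (k + 1))
  rw [show (a / b) ^ k - (a / b) ^ (k + 1) = (a / b) ^ k * (1 - a / b) by ring] at h2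
  simpa only [walkSignW_eq] using h2

end Limit

/-- Reflecting the walks exchanges the up and down weights. -/
theorem walkSignW_swap (b z a : ℝ) (n k : ℕ) :
    walkSignW a z b n k = walkSignW b z a n k := by
  have h (k : ℕ) := tailW_neg b z a n k 0 0
  simp only [neg_zero] at h
  rw [walkSignW_eq, walkSignW_eq, h, h]

end MotzkinSign

/-- **Limit law for sign changes of walks, nonzero drift**: geometric limit law with
parameter `λ = p₁/p₋₁` (negative drift) resp. `λ = p₋₁/p₁` (positive drift). -/
theorem walks_sign_changes_geometric (pm p0 p1 : ℝ)
    (hpm : 0 < pm) (hp0 : 0 < p0) (hp1 : 0 < p1) (hdrift : p1 ≠ pm) :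
    let P1 : ℝ := pm + p0 + p1
    let lam : ℝ := if p1 < pm then p1 / pm else pm / p1
    ∀ k : ℕ,
      Filter.Tendsto (fun n : ℕ => walkSignW pm p0 p1 n k / P1 ^ n)
        Filter.atTop (nhds (lam ^ k * (1 - lam))) := by
  intro P1 lam k
  have hP : 0 < P1 := by positivity
  simp only [← MotzkinSign.walkSignW_div]
  have hsum : pm / P1 + p0 / P1 + p1 / P1 = 1 := by
    rw [← add_div, ← add_div]
    exact div_self hP.ne'
  rcases lt_or_gt_of_ne hdrift with h | h
  · have hlam : lam = p1 / P1 / (pm / P1) := by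
      simp only [lam, if_pos h]
      rw [div_div_div_cancel_right₀ hP.ne']
    rw [hlam]
    exact MotzkinSign.tendsto_walkSignW_of_neg_drift (by positivity) (by positivity)
      (by gcongr) hsum k
  · have hlam : lam = pm / P1 / (p1 / P1) := by
      simp only [lam, if_neg h.not_gt]
      rw [div_div_div_cancel_right₀ hP.ne']
    rw [hlam]
    simp only [MotzkinSign.walkSignW_swap (p1 / P1)]
    exact MotzkinSign.tendsto_walkSignW_of_neg_drift (by positivity) (by positivity)
      (by gcongr) (by linarith) k
end
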